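/- Let n ≥ 2, 0 < α < 1, and let Ω ∈ L(log L)^{1/n'}(𝕊^{n−1}) have mean zero. Then: (i) for n < p < n/α and 1/q = 1/p − α/n there is C with ‖T_{Ω,α}f‖_{L^q(ℝ^n)} ≤ C ‖∇f‖_{L^p(ℝ^n)} for all f ∈ C_c^∞(ℝ^n); (ii) there is C with ‖T_{Ω,α}f‖_{L^{n/(1−α),∞}(ℝ^n)} ≤ C ‖∇f‖_{L^n(ℝ^n)} for all f ∈ C_c^∞(ℝ^n). -/

import Mathlib

open MeasureTheory Metric Set Filter
open scoped ENNReal NNReal Topology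

noncomputable section

abbrev Rn (n : ℕ) := EuclideanSpace ℝ (Fin n)

/-- An axis-parallel half-open cube in `ℝⁿ`. -/
structure Cube (n : ℕ) where
  corner : Fin n → ℝ
  side : ℝ
  side_pos : 0 < side

/-- The set of points of a cube. -/
def Cube.carrier {n : ℕ} (Q : Cube n) : Set (Rn n) :=
  {x | ∀ i, Q.corner i ≤ x i ∧ x i < Q.corner i + Q.side}

/-- Surface measure on the unit sphere `𝕊^{n-1} ⊆ ℝⁿ`. -/
def sphereMeasure (n : ℕ) : Measure (Rn n) :=
  (MeasureTheory.Measure.hausdorffMeasure ((n : ℝ) - 1)).restrict (sphere (0 : Rn n) 1)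

/-- `f ∈ C_c^∞(ℝⁿ)`. -/
def IsCcSmooth {n : ℕ} (f : Rn n → ℝ) : Prop :=
  ContDiff ℝ (⊤ : ℕ∞) f ∧ HasCompactSupport f

/-- Truncated rough fractional singular integral. -/
def roughOpTrunc (n : ℕ) (α : ℝ) (Ω f : Rn n → ℝ) (x : Rn n) (ε : ℝ) : ℝ :=
  ∫ y in {y : Rn n | ε < ‖y‖}, (Ω (‖y‖⁻¹ • y) / ‖y‖ ^ ((n : ℝ) + 1 - α)) * f (x - y)

/-- The rough fractional singular integral `T_{Ω,α} f`, as a principal value. -/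
def roughOp (n : ℕ) (α : ℝ) (Ω f : Rn n → ℝ) (x : Rn n) : ℝ :=
  limUnder (𝓝[>] (0 : ℝ)) (roughOpTrunc n α Ω f x)

/-- Riesz potential (modulo its normalizing constant) of a nonnegative function. -/
def rieszPot (n : ℕ) (α : ℝ) (g : Rn n → ℝ) (x : Rn n) : ℝ≥0∞ :=
  ∫⁻ y, ENNReal.ofReal (g y) / ENNReal.ofReal (‖x - y‖ ^ ((n : ℝ) - α))

/-- `|∇f|`. -/
def gradNorm {n : ℕ} (f : Rn n → ℝ) (y : Rn n) : ℝ := ‖gradient f y‖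

/-- Weak Lorentz norm `‖Ω‖_{L^{r,∞}(𝕊^{n-1})}`. -/
def weakLorentzSphere (n : ℕ) (r : ℝ) (Ω : Rn n → ℝ) : ℝ≥0∞ :=
  ⨆ (t : ℝ) (_ : 0 < t), ENNReal.ofReal t * sphereMeasure n {y | t < |Ω y|} ^ (1 / r)

/-- Lorentz norm `‖Ω‖_{L^{r,q}(𝕊^{n-1})}`. -/
def lorentzSphere (n : ℕ) (r q : ℝ) (Ω : Rn n → ℝ) : ℝ≥0∞ :=
  (ENNReal.ofReal r *
      ∫⁻ t in Ioi (0 : ℝ),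
        ENNReal.ofReal t ^ q * sphereMeasure n {y | t < |Ω y|} ^ (q / r) / ENNReal.ofReal t) ^ (1 / q)

/-- The Young function `Φ(t) = t log(1+t)^{1/n'}`, `1/n' = (n-1)/n`. -/
def orliczYoung (n : ℕ) (t : ℝ) : ℝ := t * Real.log (1 + t) ^ (((n : ℝ) - 1) / n)

/-- Admissible Orlicz levels for the `L(log L)^{1/n'}` norm w.r.t. normalized surface measure. -/
def orliczSet (n : ℕ) (Ω : Rn n → ℝ) : Set ℝ :=
  {lam | 0 < lam ∧ ⨍ y, orliczYoung n (|Ω y| / lam) ∂sphereMeasure n ≤ 1}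

/-- Orlicz norm `‖Ω‖_{L(log L)^{1/n'}(𝕊^{n-1})}`. -/
def orliczSphereNorm (n : ℕ) (Ω : Rn n → ℝ) : ℝ := sInf (orliczSet n Ω)

/-- A sparse family of cubes. -/
def IsSparse {n : ℕ} (𝒮 : Set (Cube n)) : Prop :=
  ∃ E : Cube n → Set (Rn n),
    (∀ Q ∈ 𝒮, E Q ⊆ Q.carrier ∧ volume Q.carrier ≤ 2 * volume (E Q)) ∧
    𝒮.Pairwise fun Q P => Disjoint (E Q) (E P)

/-- A dyadic grid of cubes. -/
def IsDyadicGrid {n : ℕ} (𝒟 : Set (Cube n)) : Prop :=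
  (∀ Q ∈ 𝒟, ∃ k : ℤ, Q.side = (2 : ℝ) ^ k) ∧
  (∀ (k : ℤ) (x : Rn n), ∃! Q : Cube n, Q ∈ 𝒟 ∧ Q.side = (2 : ℝ) ^ k ∧ x ∈ Q.carrier) ∧
  (∀ Q ∈ 𝒟, ∀ P ∈ 𝒟, Disjoint Q.carrier P.carrier ∨ Q.carrier ⊆ P.carrier ∨ P.carrier ⊆ Q.carrier)

/-- The shifted dyadic grid `𝒟_t = {2^k([0,1)^n + m + (-1)^k t)}`. -/
def shiftedGrid (n : ℕ) (t : Fin n → ℝ) : Set (Cube n) :=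
  {Q | ∃ (k : ℤ) (m : Fin n → ℤ),
      Q.side = (2 : ℝ) ^ k ∧ Q.corner = fun i => (2 : ℝ) ^ k * ((m i : ℝ) + (-1 : ℝ) ^ k * t i)}

/-- `(⨍_Q |g|^s)^{1/s}` as an extended nonnegative real. -/
def avgLs (n : ℕ) (s : ℝ) (Q : Cube n) (g : Rn n → ℝ) : ℝ≥0∞ :=
  ((volume Q.carrier)⁻¹ * ∫⁻ y in Q.carrier, ENNReal.ofReal |g y| ^ s) ^ (1 / s)

/-- The `L^s` sparse (or dyadic) fractional operator `I^𝒮_{α,L^s}`. -/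
def sparseOpLs (n : ℕ) (α s : ℝ) (𝒮 : Set (Cube n)) (g : Rn n → ℝ) (x : Rn n) : ℝ≥0∞ :=
  ∑' Q : 𝒮, Set.indicator (Q : Cube n).carrier
      (fun _ => ENNReal.ofReal ((Q : Cube n).side ^ α) * avgLs n s (Q : Cube n) g) x

/-- The `L^s` fractional maximal operator `M_{α,L^s}`. -/
def maxOpLs (n : ℕ) (α s : ℝ) (g : Rn n → ℝ) (x : Rn n) : ℝ≥0∞ :=
  ⨆ (Q : Cube n) (_ : x ∈ Q.carrier), ENNReal.ofReal (Q.side ^ α) * avgLs n s Q g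

/-- The measure `w dx` associated with a weight `w`. -/
def wMeasure (n : ℕ) (w : Rn n → ℝ) : Measure (Rn n) :=
  volume.withDensity fun x => ENNReal.ofReal (w x)

/-- Muckenhoupt `A_∞` (via the standard fair-proportion characterization). -/
def IsAinfty {n : ℕ} (w : Rn n → ℝ) : Prop :=
  ∃ C > (0 : ℝ), ∃ δ > (0 : ℝ), ∀ Q : Cube n, ∀ S ⊆ Q.carrier, MeasurableSet S →
    wMeasure n w S ≤
      ENNReal.ofReal C * (volume S / volume Q.carrier) ^ δ * wMeasure n w Q.carrier

/-- `‖g‖_{L^p(w)}` for an `ℝ≥0∞`-valued `g`. -/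
def lpNormW (n : ℕ) (p : ℝ) (w : Rn n → ℝ) (g : Rn n → ℝ≥0∞) : ℝ≥0∞ :=
  (∫⁻ x, g x ^ p ∂wMeasure n w) ^ (1 / p)

/-- `‖g‖_{L^{p,∞}(w)}` for an `ℝ≥0∞`-valued `g`. -/
def weakNormW (n : ℕ) (p : ℝ) (w : Rn n → ℝ) (g : Rn n → ℝ≥0∞) : ℝ≥0∞ :=
  ⨆ (lam : ℝ) (_ : 0 < lam),
    ENNReal.ofReal lam * wMeasure n w {x | ENNReal.ofReal lam < g x} ^ (1 / p)

/-- Unweighted `L^p` "norm" of an `ℝ≥0∞`-valued function. -/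
def lqNorm (n : ℕ) (p : ℝ) (g : Rn n → ℝ≥0∞) : ℝ≥0∞ :=
  (∫⁻ x, g x ^ p) ^ (1 / p)

/-- Unweighted weak `L^p` norm of an `ℝ≥0∞`-valued function. -/
def weakNorm (n : ℕ) (p : ℝ) (g : Rn n → ℝ≥0∞) : ℝ≥0∞ :=
  ⨆ (lam : ℝ) (_ : 0 < lam),
    ENNReal.ofReal lam * volume {x | ENNReal.ofReal lam < g x} ^ (1 / p)

/-- Maximal function of a measure over cubes. -/
def measMax (n : ℕ) (μ : Measure (Rn n)) (x : Rn n) : ℝ≥0∞ :=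
  ⨆ (Q : Cube n) (_ : x ∈ Q.carrier), μ Q.carrier / volume Q.carrier

/-- The rough fractional maximal operator `M_{Ω,α}`. -/
def roughMax (n : ℕ) (α : ℝ) (Ω f : Rn n → ℝ) (x : Rn n) : ℝ≥0∞ :=
  ⨆ (t : ℝ) (_ : 0 < t),
    ENNReal.ofReal (t ^ (α - 1)) * ((volume (ball (0 : Rn n) t))⁻¹ *
      ∫⁻ y in ball (0 : Rn n) t, ENNReal.ofReal |Ω (‖y‖⁻¹ • y) * f (x - y)|)

/-- Average of `f` over the ball `B(x,t)`. -/
def ballAvg {n : ℕ} (f : Rn n → ℝ) (x : Rn n) (t : ℝ) : ℝ :=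
  ⨍ y in ball x t, f y

/-- The sharp rough fractional maximal operator `M^#_{Ω,α}`. -/
def roughMaxSharp (n : ℕ) (α : ℝ) (Ω f : Rn n → ℝ) (x : Rn n) : ℝ≥0∞ :=
  ⨆ (t : ℝ) (_ : 0 < t),
    ENNReal.ofReal (t ^ (α - 1)) * ((volume (ball (0 : Rn n) t))⁻¹ *
      ∫⁻ y in ball (0 : Rn n) t,
        ENNReal.ofReal (|Ω (‖y‖⁻¹ • y)| * |f (x - y) - ballAvg f x t|))

/-- The natural rough maximal operator `M^♮_Ω` (with `α = 1`). -/
def roughMaxNatural (n : ℕ) (Ω f : Rn n → ℝ) (x : Rn n) : ℝ≥0∞ :=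
  ⨆ (t : ℝ) (_ : 0 < t),
    ENNReal.ofReal |⨍ y in ball (0 : Rn n) t, Ω (‖y‖⁻¹ • y) * f (x - y)|

/-- The fractional spherical maximal operator `𝒮_β`. -/
def sphMax (n : ℕ) (β : ℝ) (f : Rn n → ℝ) (x : Rn n) : ℝ≥0∞ :=
  ⨆ (r : ℝ) (_ : 0 < r),
    ENNReal.ofReal (r ^ β) *
      ((MeasureTheory.Measure.hausdorffMeasure ((n : ℝ) - 1) (sphere x r))⁻¹ *
        ∫⁻ y in sphere x r, ENNReal.ofReal |f y|
          ∂(MeasureTheory.Measure.hausdorffMeasure ((n : ℝ) - 1)))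


/-- The measure `w^q dx`. -/
def wqMeasure (n : ℕ) (q : ℝ) (w : Rn n → ℝ) : Measure (Rn n) :=
  volume.withDensity fun x => ENNReal.ofReal (w x) ^ q

/-- Weak norm `‖g‖_{L^{q,∞}(w^q)}` for `ℝ≥0∞`-valued `g`. -/
def weakNormWq (n : ℕ) (q : ℝ) (w : Rn n → ℝ) (g : Rn n → ℝ≥0∞) : ℝ≥0∞ :=
  ⨆ (lam : ℝ) (_ : 0 < lam),
    ENNReal.ofReal lam * wqMeasure n q w {x | ENNReal.ofReal lam < g x} ^ (1 / q)

/-!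
Because `Ω` has mean zero on the sphere, any bounded radial function `φ(|y|)` may be subtracted from
`f(x - y)` in the principal value without changing it. Take `φ = f(x)` for `|y| ≤ R` and the average
of `f` over the ball of radius `|y|` about `x` for `|y| > R`.

* For `|y| ≤ R`, the difference `f(x - y) - f(x)` is the integral of `∇f` along a segment, so this
  part is at most an average of `|∇f|` over segments, with a kernel of total mass `≲ R^α`.
* For `|y| > R`, integrating along each ray separately and using Hölder's inequality costs only the
  `L¹` norm of `Ω` and gives `≲ R^{-δ} ‖∇f‖_p`, where `δ = n / p - α > 0`.

Choosing `R` so that the second bound is half of a level `l` leaves `|{|T f| > l}|` controlled by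
the first, restricted to large values of `|∇f|`; integrating over `l` yields the `L^p → L^q` bound,
for `p = n` as well, where it is stronger than weak type.
-/

/-! ### Uniformly distributed measures -/

section UniformlyDistributed

variable {X : Type*} [MetricSpace X] [MeasurableSpace X]

/-- A measure on a metric space is uniformly distributed if the measure of a ball depends only on
its radius. Two such measures are proportional, which identifies the surface measure of polar
coordinates with the Hausdorff measure of the sphere. -/
def IsUniformlyDistributed (μ : Measure X) : Prop :=
  ∀ x y r, μ (ball x r) = μ (ball y r)

variable [BorelSpace X] [SecondCountableTopology X] {μ ν : Measure X}

theorem setLIntegral_measure_ball_inter_comm [SFinite μ] [SFinite ν] (r : ℝ) (A B : Set X) :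
    ∫⁻ x in A, ν (ball x r ∩ B) ∂μ = ∫⁻ y in B, μ (ball y r ∩ A) ∂ν := by
  have hnear : MeasurableSet {z : X × X | dist z.1 z.2 < r} :=
    (isOpen_lt (continuous_fst.dist continuous_snd) continuous_const).measurableSet
  calc
    ∫⁻ x in A, ν (ball x r ∩ B) ∂μ
        = ((μ.restrict A).prod (ν.restrict B)) {z | dist z.1 z.2 < r} := by
      rw [Measure.prod_apply hnear]
      refine lintegral_congr fun x ↦ ?_
      rw [← Measure.restrict_apply measurableSet_ball]
      simp only [ball, dist_comm, preimage_ofPred_eq]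
    _ = ∫⁻ y in B, μ (ball y r ∩ A) ∂ν := by
      rw [Measure.prod_apply_symm hnear]
      refine lintegral_congr fun y ↦ ?_
      rw [← Measure.restrict_apply measurableSet_ball]
      simp only [ball, preimage_ofPred_eq]

namespace IsUniformlyDistributed

theorem measure_ball_mul_measure_univ_comm [SFinite μ] [SFinite ν]
    (hμ : IsUniformlyDistributed μ) (hν : IsUniformlyDistributed ν) (x : X) (r : ℝ) :
    ν (ball x r) * μ univ = μ (ball x r) * ν univ := by
  simpa [hμ _ x, hν _ x] using
    setLIntegral_measure_ball_inter_comm (μ := μ) (ν := ν) r univ univ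

theorem measure_ball_mul_measure_compl_thickening_le [SFinite μ] [SFinite ν]
    (hμ : IsUniformlyDistributed μ) (hν : IsUniformlyDistributed ν) (x : X) (r : ℝ) (F : Set X) :
    ν (ball x r) * μ (thickening r F)ᶜ ≤ μ (ball x r) * ν Fᶜ := by
  have ball_subset : ∀ y ∈ (thickening r F)ᶜ, ball y r ⊆ Fᶜ := fun y hy z hz hzF ↦
    hy (mem_thickening_iff.2 ⟨z, hzF, mem_ball'.1 hz⟩)
  calc
    ν (ball x r) * μ (thickening r F)ᶜ
        = ∫⁻ y in (thickening r F)ᶜ, ν (ball y r ∩ Fᶜ) ∂μ := by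
      rw [← setLIntegral_const]
      refine setLIntegral_congr_fun isOpen_thickening.measurableSet.compl fun y hy ↦ ?_
      simp only [inter_eq_left.2 (ball_subset y hy), hν y x]
    _ = ∫⁻ y in Fᶜ, μ (ball y r ∩ (thickening r F)ᶜ) ∂ν :=
      setLIntegral_measure_ball_inter_comm r _ _
    _ ≤ ∫⁻ _ in Fᶜ, μ (ball x r) ∂ν :=
      lintegral_mono fun y ↦ (measure_mono inter_subset_left).trans_eq (hμ y x r)
    _ = μ (ball x r) * ν Fᶜ := setLIntegral_const _ _

variable [IsFiniteMeasure μ] [IsFiniteMeasure ν] [ν.IsOpenPosMeasure]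

theorem measure_univ_mul_measure_compl_thickening_le
    (hμ : IsUniformlyDistributed μ) (hν : IsUniformlyDistributed ν)
    {r : ℝ} (hr : 0 < r) (F : Set X) :
    ν univ * μ (thickening r F)ᶜ ≤ μ univ * ν Fᶜ := by
  rcases isEmpty_or_nonempty X with hX | ⟨⟨x⟩⟩
  · simp [univ_eq_empty_iff.2 hX]
  have hball : ν (ball x r) ≠ 0 := (measure_ball_pos ν x hr).ne'
  refine (ENNReal.mul_le_mul_iff_right hball (measure_ne_top ν _)).1 ?_
  calc
    ν (ball x r) * (ν univ * μ (thickening r F)ᶜ)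
        = ν univ * (ν (ball x r) * μ (thickening r F)ᶜ) := by ring
    _ ≤ ν univ * (μ (ball x r) * ν Fᶜ) :=
      mul_le_mul' le_rfl (hμ.measure_ball_mul_measure_compl_thickening_le hν x r F)
    _ = μ (ball x r) * ν univ * ν Fᶜ := by ring
    _ = ν (ball x r) * (μ univ * ν Fᶜ) := by
      rw [← hμ.measure_ball_mul_measure_univ_comm hν x r, mul_assoc]

theorem measure_univ_mul_measure_le_of_isOpen
    (hμ : IsUniformlyDistributed μ) (hν : IsUniformlyDistributed ν) {U : Set X} (hU : IsOpen U) :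
    ν univ * μ U ≤ μ univ * ν U := by
  have thickening_tendsto : Tendsto (fun r ↦ μ (thickening r Uᶜ)ᶜ) (𝓝[>] 0) (𝓝 (μ U)) := by
    simp only [measure_compl isOpen_thickening.measurableSet (measure_ne_top μ _)]
    rw [← compl_compl U, measure_compl hU.measurableSet.compl (measure_ne_top μ _), compl_compl]
    exact ENNReal.Tendsto.sub tendsto_const_nhds
      (tendsto_measure_thickening_of_isClosed ⟨1, one_pos, measure_ne_top μ _⟩ hU.isClosed_compl)
      (.inl (measure_ne_top μ _))
  refine le_of_tendsto
    (ENNReal.Tendsto.const_mul thickening_tendsto (.inr (measure_ne_top ν _))) ?_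
  filter_upwards [self_mem_nhdsWithin] with r hr
  simpa using hμ.measure_univ_mul_measure_compl_thickening_le hν hr Uᶜ

theorem smul_eq_smul (hμ : IsUniformlyDistributed μ) (hν : IsUniformlyDistributed ν) :
    ν univ • μ = μ univ • ν := by
  have := μ.smul_finite (measure_ne_top ν univ)
  have := ν.smul_finite (measure_ne_top μ univ)
  refine Measure.eq_of_le_of_measure_univ_eq (Measure.le_iff'.2 fun s ↦ ?_) (by simp [mul_comm])
  rw [s.measure_eq_iInf_isOpen (μ univ • ν)]
  refine le_iInf₂ fun U hsU ↦ le_iInf fun hU ↦ (measure_mono hsU).trans ?_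
  exact hμ.measure_univ_mul_measure_le_of_isOpen hν hU

end IsUniformlyDistributed

end UniformlyDistributed

/-! ### Surface measure on the unit sphere -/

section SphereMeasure

open Module
open scoped RealInnerProductSpace Pointwise

variable {E : Type*} [NormedAddCommGroup E] [InnerProductSpace ℝ E]

theorem image_val_ball_of_map_eq (L : E ≃ₗᵢ[ℝ] E) {x y : sphere (0 : E) 1} (hL : L x = y)
    (r : ℝ) : Subtype.val '' ball y r = L '' (Subtype.val '' ball x r) := by
  have sphere_eq : {z : E | z ∈ sphere (0 : E) 1} = sphere 0 1 := rfl
  rw [Subtype.image_ball, Subtype.image_ball, image_inter L.injective, sphere_eq]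
  simp [← hL]

theorem exists_linearIsometryEquiv_map_eq (x y : sphere (0 : E) 1) :
    ∃ L : E ≃ₗᵢ[ℝ] E, L x = y :=
  ⟨_, Submodule.reflection_sub (by simp)⟩

theorem image_Ioo_smul (L : E ≃ₗᵢ[ℝ] E) (s : Set E) :
    L '' (Ioo (0 : ℝ) 1 • s) = Ioo (0 : ℝ) 1 • L '' s :=
  image_image2_distrib_right fun t z ↦ L.map_smul t z

theorem hemisphere_subset_image_stereoInvFunAux {v : E} (hv : ‖v‖ = 1) :
    {x ∈ sphere (0 : E) 1 | ⟪v, x⟫ ≤ 0} ⊆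
      (fun w : (ℝ ∙ v)ᗮ ↦ stereoInvFunAux v (w : E)) '' closedBall 0 2 := by
  rintro x ⟨hx, hx_le⟩
  have hxv : x ≠ v := by
    rintro rfl
    rw [real_inner_self_eq_norm_sq, hv] at hx_le
    linarith
  refine ⟨stereoToFun v x, ?_, congrArg Subtype.val (stereo_left_inv hv (x := ⟨x, hx⟩) hxv)⟩
  have hproj : ‖(ℝ ∙ v)ᗮ.orthogonalProjectionOnto x‖ ≤ 1 :=
    (Submodule.norm_orthogonalProjectionOnto_apply_le _ x).trans (mem_sphere_zero_iff_norm.1 hx).le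
  have hdenom : (1 : ℝ) ≤ 1 - ⟪v, x⟫ := by linarith
  have hcoeff : ‖2 / (1 - ⟪v, x⟫)‖ ≤ 2 := by
    rw [Real.norm_of_nonneg (by positivity), div_le_iff₀ (by positivity)]
    linarith
  rw [mem_closedBall_zero_iff, stereoToFun_apply, norm_smul]
  exact (mul_le_mul hcoeff hproj (norm_nonneg _) zero_le_two).trans_eq (mul_one 2)

theorem ball_subset_orthogonalProjectionOnto_image_sphere {v : E} (hv : ‖v‖ = 1) :
    ball (0 : (ℝ ∙ v)ᗮ) 1 ⊆ (ℝ ∙ v)ᗮ.orthogonalProjectionOnto '' sphere (0 : E) 1 := by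
  intro w hw
  rw [mem_ball_zero_iff] at hw
  have hwv : ⟪(w : E), v⟫ = 0 := Submodule.mem_orthogonal_singleton_iff_inner_left.1 w.2
  have hsqrt : 0 ≤ 1 - ‖w‖ ^ 2 := by nlinarith [norm_nonneg w]
  refine ⟨(w : E) + √(1 - ‖w‖ ^ 2) • v, ?_, ?_⟩
  · rw [mem_sphere_zero_iff_norm, ← sq_eq_sq₀ (norm_nonneg _) zero_le_one, norm_add_sq_real,
      inner_smul_right, hwv, norm_smul, hv, mul_one, Real.norm_eq_abs, sq_abs, Real.sq_sqrt hsqrt]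
    simp
  · rw [map_add, map_smul, Submodule.orthogonalProjectionOnto_mem_subspace_eq_self,
      Submodule.orthogonalProjectionOnto_orthogonal_apply_eq_zero
        (Submodule.mem_span_singleton_self v), smul_zero, add_zero]

variable [MeasurableSpace E] [BorelSpace E]

theorem isUniformlyDistributed_hausdorffMeasure_sphere (d : ℝ) (hd : 0 ≤ d) :
    IsUniformlyDistributed (Measure.hausdorffMeasure d : Measure (sphere (0 : E) 1)) := by
  intro x y r
  obtain ⟨L, hL⟩ := exists_linearIsometryEquiv_map_eq x y
  rw [← isometry_subtype_coe.hausdorffMeasure_image (.inl hd) (ball y r),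
    image_val_ball_of_map_eq L hL r, L.isometry.hausdorffMeasure_image (.inl hd),
    isometry_subtype_coe.hausdorffMeasure_image (.inl hd)]

variable [FiniteDimensional ℝ E]

theorem isUniformlyDistributed_toSphere :
    IsUniformlyDistributed (volume : Measure E).toSphere := by
  intro x y r
  obtain ⟨L, hL⟩ := exists_linearIsometryEquiv_map_eq x y
  rw [Measure.toSphere_apply' _ measurableSet_ball, Measure.toSphere_apply' _ measurableSet_ball,
    image_val_ball_of_map_eq L hL r, ← image_Ioo_smul]
  rw [← L.measurePreserving.measure_preimage_emb L.toMeasurableEquiv.measurableEmbedding (_ '' _),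
    preimage_image_eq _ L.injective]

theorem isAddHaarMeasure_hausdorffMeasure_orthogonal_span_singleton {v : E} (hv : v ≠ 0) :
    (Measure.hausdorffMeasure ((finrank ℝ E : ℝ) - 1) : Measure (ℝ ∙ v)ᗮ).IsAddHaarMeasure := by
  have hdim : (finrank ℝ (ℝ ∙ v)ᗮ : ℝ) = finrank ℝ E - 1 := by
    rw [← (ℝ ∙ v).finrank_add_finrank_orthogonal, finrank_span_singleton hv]
    simp
  exact hdim ▸ isAddHaarMeasure_hausdorffMeasure

theorem hausdorffMeasure_hemisphere_lt_top {v : E} (hv : ‖v‖ = 1) :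
    Measure.hausdorffMeasure ((finrank ℝ E : ℝ) - 1) {x ∈ sphere (0 : E) 1 | ⟪v, x⟫ ≤ 0} < ⊤ := by
  have hv0 : v ≠ 0 := norm_ne_zero_iff.1 (by simp [hv])
  have hdim : (0 : ℝ) ≤ finrank ℝ E - 1 := by
    have := nontrivial_of_ne v 0 hv0
    exact sub_nonneg.2 (Nat.one_le_cast.2 finrank_pos)
  have stereo_contDiff : ContDiff ℝ 1 fun w : (ℝ ∙ v)ᗮ ↦ stereoInvFunAux v (w : E) :=
    contDiff_stereoInvFunAux.comp (ℝ ∙ v)ᗮ.subtypeL.contDiff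
  obtain ⟨K, hK⟩ := (stereo_contDiff.locallyLipschitz.locallyLipschitzOn (s := closedBall 0 2)
    ).exists_lipschitzOnWith_of_compact (isCompact_closedBall _ _)
  have := isAddHaarMeasure_hausdorffMeasure_orthogonal_span_singleton hv0
  calc
    _ ≤ _ := measure_mono (hemisphere_subset_image_stereoInvFunAux hv)
    _ ≤ _ := hK.hausdorffMeasure_image_le hdim
    _ < ⊤ := ENNReal.mul_lt_top (ENNReal.rpow_lt_top_of_nonneg hdim (by simp))
      (isCompact_closedBall _ _).measure_lt_top

variable [Nontrivial E]

theorem hausdorffMeasure_sphere_lt_top :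
    Measure.hausdorffMeasure ((finrank ℝ E : ℝ) - 1) (sphere (0 : E) 1) < ⊤ := by
  obtain ⟨v, hv⟩ := exists_norm_eq E zero_le_one
  have hcover : sphere (0 : E) 1 ⊆
      {x ∈ sphere (0 : E) 1 | ⟪v, x⟫ ≤ 0} ∪ {x ∈ sphere (0 : E) 1 | ⟪-v, x⟫ ≤ 0} := fun x hx ↦
    (le_total ⟪v, x⟫ 0).imp (⟨hx, ·⟩) fun h ↦ ⟨hx, by rwa [inner_neg_left, neg_nonpos]⟩
  refine (measure_mono hcover).trans_lt (measure_union_lt_top ?_ ?_)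
  · exact hausdorffMeasure_hemisphere_lt_top hv
  · exact hausdorffMeasure_hemisphere_lt_top (by rwa [norm_neg])

theorem hausdorffMeasure_sphere_pos :
    0 < Measure.hausdorffMeasure ((finrank ℝ E : ℝ) - 1) (sphere (0 : E) 1) := by
  obtain ⟨v, hv⟩ := exists_norm_eq E zero_le_one
  have hdim : (0 : ℝ) ≤ finrank ℝ E - 1 := sub_nonneg.2 (Nat.one_le_cast.2 finrank_pos)
  have := isAddHaarMeasure_hausdorffMeasure_orthogonal_span_singleton
    (norm_ne_zero_iff.1 (by simp [hv]) : v ≠ 0)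
  calc
    0 < Measure.hausdorffMeasure ((finrank ℝ E : ℝ) - 1) (ball (0 : (ℝ ∙ v)ᗮ) 1) :=
      measure_ball_pos _ _ one_pos
    _ ≤ _ := measure_mono (ball_subset_orthogonalProjectionOnto_image_sphere hv)
    _ ≤ _ := (ℝ ∙ v)ᗮ.lipschitzWith_orthogonalProjectionOnto.hausdorffMeasure_image_le hdim _
    _ = Measure.hausdorffMeasure ((finrank ℝ E : ℝ) - 1) (sphere (0 : E) 1) := by simp

theorem exists_toSphere_eq_smul_hausdorffMeasure :
    ∃ c : ℝ≥0∞, c ≠ ⊤ ∧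
      (volume : Measure E).toSphere = c • Measure.hausdorffMeasure ((finrank ℝ E : ℝ) - 1) := by
  have hdim : (0 : ℝ) ≤ finrank ℝ E - 1 := sub_nonneg.2 (Nat.one_le_cast.2 finrank_pos)
  set μ : Measure (sphere (0 : E) 1) := Measure.hausdorffMeasure ((finrank ℝ E : ℝ) - 1)
  have hμ_univ : μ univ = Measure.hausdorffMeasure ((finrank ℝ E : ℝ) - 1) (sphere (0 : E) 1) := by
    rw [← isometry_subtype_coe.hausdorffMeasure_image (.inl hdim), image_univ, Subtype.range_coe]
  have hμ_ne_zero : μ univ ≠ 0 := hμ_univ ▸ hausdorffMeasure_sphere_pos.ne'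
  have hμ_ne_top : μ univ ≠ ⊤ := hμ_univ ▸ hausdorffMeasure_sphere_lt_top.ne
  have : IsFiniteMeasure μ := ⟨hμ_ne_top.lt_top⟩
  refine ⟨(volume : Measure E).toSphere univ / μ univ,
    ENNReal.div_ne_top (measure_ne_top _ _) hμ_ne_zero, ?_⟩
  rw [ENNReal.div_eq_inv_mul, mul_smul,
    (isUniformlyDistributed_hausdorffMeasure_sphere _ hdim).smul_eq_smul
      isUniformlyDistributed_toSphere,
    smul_smul, ENNReal.inv_mul_cancel hμ_ne_zero hμ_ne_top, one_smul]

end SphereMeasure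

section

variable {n : ℕ}

theorem sphereMeasure_eq_map_hausdorffMeasure (hn : n ≠ 0) :
    sphereMeasure n = (Measure.hausdorffMeasure ((n : ℝ) - 1)).map
      (Subtype.val : sphere (0 : Rn n) 1 → Rn n) := by
  have hdim : (0 : ℝ) ≤ (n : ℝ) - 1 :=
    sub_nonneg.2 (Nat.one_le_cast.2 (Nat.one_le_iff_ne_zero.2 hn))
  rw [isometry_subtype_coe.map_hausdorffMeasure (.inl hdim), Subtype.range_coe, sphereMeasure]

theorem integrable_toSphere_of_integrable_sphereMeasure (hn : n ≠ 0) {Ω : Rn n → ℝ}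
    (hΩ : Integrable Ω (sphereMeasure n)) :
    Integrable (fun θ : sphere (0 : Rn n) 1 ↦ Ω θ) (volume : Measure (Rn n)).toSphere := by
  have : NeZero n := ⟨hn⟩
  obtain ⟨c, hc, hvol⟩ := exists_toSphere_eq_smul_hausdorffMeasure (E := Rn n)
  rw [sphereMeasure_eq_map_hausdorffMeasure hn] at hΩ
  rw [hvol, finrank_euclideanSpace_fin]
  exact (hΩ.comp_measurable measurable_subtype_coe).smul_measure hc

theorem integral_toSphere_eq_zero_of_integral_sphereMeasure_eq_zero (hn : n ≠ 0) {Ω : Rn n → ℝ}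
    (hΩ : ∫ y, Ω y ∂sphereMeasure n = 0) :
    ∫ θ : sphere (0 : Rn n) 1, Ω θ ∂(volume : Measure (Rn n)).toSphere = 0 := by
  have : NeZero n := ⟨hn⟩
  obtain ⟨c, -, hvol⟩ := exists_toSphere_eq_smul_hausdorffMeasure (E := Rn n)
  rw [sphereMeasure_eq_map_hausdorffMeasure hn,
    (MeasurableEmbedding.subtype_coe isClosed_sphere.measurableSet).integral_map] at hΩ
  rw [hvol, finrank_euclideanSpace_fin, integral_smul_measure, hΩ, smul_zero]

end

/-! ### Polar coordinates and homogeneous kernels -/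

section Polar

open Module

variable {E : Type*} [NormedAddCommGroup E] [NormedSpace ℝ E]

/-- The kernel `Ω(y/|y|) |y|^{-s}`, homogeneous of degree `-s`. Since `0⁻¹ = 0`,
its value at the origin is governed by `Ω 0`. -/
def homogeneousKernel (s : ℝ) (Ω : E → ℝ) (y : E) : ℝ :=
  Ω (‖y‖⁻¹ • y) / ‖y‖ ^ s

theorem homogeneousKernel_smul (s : ℝ) (Ω : E → ℝ) {r : ℝ} (hr : 0 < r) (θ : sphere (0 : E) 1) :
    homogeneousKernel s Ω (r • (θ : E)) = Ω θ * r ^ (-s) := by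
  rw [homogeneousKernel, norm_smul, norm_eq_of_mem_sphere, mul_one, Real.norm_of_nonneg hr.le,
    smul_smul, inv_mul_cancel₀ hr.ne', one_smul, Real.rpow_neg hr.le, div_eq_mul_inv]

variable [MeasurableSpace E] [BorelSpace E]

theorem measurable_homogeneousKernel (s : ℝ) {Ω : E → ℝ} (hΩ : Measurable Ω) :
    Measurable (homogeneousKernel s Ω) :=
  (hΩ.comp (measurable_norm.inv.smul measurable_id)).div (measurable_norm.pow_const s)

variable [FiniteDimensional ℝ E] [Nontrivial E] (μ : Measure E) [μ.IsAddHaarMeasure]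

theorem lintegral_volumeIoiPow (k : ℕ) {g : ℝ → ℝ≥0∞} (hg : Measurable g) :
    ∫⁻ r, g r ∂Measure.volumeIoiPow k = ∫⁻ r in Ioi 0, ENNReal.ofReal (r ^ k) * g r := by
  rw [Measure.volumeIoiPow, lintegral_withDensity_eq_lintegral_mul _ (by fun_prop) (by fun_prop)]
  exact lintegral_subtype_comap measurableSet_Ioi fun r ↦ ENNReal.ofReal (r ^ k) * g r

theorem lintegral_eq_lintegral_toSphere {G : E → ℝ≥0∞} (hG : Measurable G) :
    ∫⁻ y, G y ∂μ = ∫⁻ θ : sphere (0 : E) 1,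
      (∫⁻ r in Ioi 0, ENNReal.ofReal (r ^ (finrank ℝ E - 1)) * G (r • (θ : E))) ∂μ.toSphere := by
  have hpolar : Measurable fun z : sphere (0 : E) 1 × Ioi (0 : ℝ) ↦ G (z.2.1 • z.1.1) :=
    hG.comp (by fun_prop)
  calc
    ∫⁻ y, G y ∂μ = ∫⁻ y : ({0}ᶜ : Set E), G y ∂μ.comap Subtype.val := by
      rw [lintegral_subtype_comap (measurableSet_singleton _).compl, restrict_compl_singleton]
    _ = ∫⁻ y, (fun z : sphere (0 : E) 1 × Ioi (0 : ℝ) ↦ G (z.2.1 • z.1.1))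
          (homeomorphUnitSphereProd E y) ∂μ.comap Subtype.val := by
      refine lintegral_congr fun y ↦ ?_
      have : ‖(y : E)‖ ≠ 0 := norm_ne_zero_iff.2 y.2
      simp [smul_smul, this]
    _ = ∫⁻ θ : sphere (0 : E) 1,
          (∫⁻ r, G (r.1 • θ.1) ∂Measure.volumeIoiPow (finrank ℝ E - 1)) ∂μ.toSphere := by
      rw [μ.measurePreserving_homeomorphUnitSphereProd.lintegral_comp hpolar,
        lintegral_prod _ hpolar.aemeasurable]
    _ = _ := lintegral_congr fun θ ↦
      lintegral_volumeIoiPow (g := fun r ↦ G (r • θ.1)) _ (hG.comp (by fun_prop))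

theorem lintegral_enorm_homogeneousKernel_mul (s : ℝ) {Ω : E → ℝ} (hΩ : Measurable Ω)
    {G : E → ℝ≥0∞} (hG : Measurable G) :
    ∫⁻ y, ‖homogeneousKernel s Ω y‖ₑ * G y ∂μ = ∫⁻ θ : sphere (0 : E) 1,
      ‖Ω θ‖ₑ * (∫⁻ r in Ioi 0, ENNReal.ofReal (r ^ ((finrank ℝ E : ℝ) - 1 - s)) * G (r • (θ : E)))
        ∂μ.toSphere := by
  have hk : Measurable (homogeneousKernel s Ω) := measurable_homogeneousKernel s hΩ
  rw [lintegral_eq_lintegral_toSphere μ (G := fun y ↦ ‖homogeneousKernel s Ω y‖ₑ * G y)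
    (by fun_prop)]
  refine lintegral_congr fun θ ↦ ?_
  rw [← lintegral_const_mul _ (by fun_prop)]
  refine setLIntegral_congr_fun measurableSet_Ioi fun r (hr : 0 < r) ↦ ?_
  have radial_weight : ENNReal.ofReal (r ^ ((finrank ℝ E : ℝ) - 1 - s)) =
      ENNReal.ofReal (r ^ (finrank ℝ E - 1)) * ENNReal.ofReal (r ^ (-s)) := by
    rw [← ENNReal.ofReal_mul (by positivity), ← Real.rpow_natCast, ← Real.rpow_add hr,
      Nat.cast_sub finrank_pos, Nat.cast_one, sub_eq_add_neg _ s]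
  rw [homogeneousKernel_smul s Ω hr θ, enorm_mul, Real.enorm_of_nonneg (Real.rpow_nonneg hr.le _),
    radial_weight]
  ring

theorem lintegral_enorm_homogeneousKernel_mul_le (s : ℝ) {Ω : E → ℝ} (hΩ : Measurable Ω)
    {G : E → ℝ≥0∞} (hG : Measurable G) {S : ℝ≥0∞}
    (hS : ∀ θ ∈ sphere (0 : E) 1,
      ∫⁻ r in Ioi 0, ENNReal.ofReal (r ^ ((finrank ℝ E : ℝ) - 1 - s)) * G (r • θ) ≤ S) :
    ∫⁻ y, ‖homogeneousKernel s Ω y‖ₑ * G y ∂μ ≤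
      (∫⁻ θ : sphere (0 : E) 1, ‖Ω θ‖ₑ ∂μ.toSphere) * S := by
  rw [lintegral_enorm_homogeneousKernel_mul μ s hΩ hG, ← lintegral_mul_const _ (by fun_prop)]
  exact lintegral_mono fun θ ↦ mul_le_mul' le_rfl (hS θ θ.2)

theorem integral_homogeneousKernel_mul_comp_norm_eq_zero (s : ℝ) {Ω : E → ℝ}
    (hΩ : ∫ θ : sphere (0 : E) 1, Ω θ ∂μ.toSphere = 0) (φ : ℝ → ℝ) :
    ∫ y, homogeneousKernel s Ω y * φ ‖y‖ ∂μ = 0 := by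
  calc
    ∫ y, homogeneousKernel s Ω y * φ ‖y‖ ∂μ
        = ∫ y : ({0}ᶜ : Set E), homogeneousKernel s Ω y * φ ‖(y : E)‖ ∂μ.comap Subtype.val := by
      rw [integral_subtype_comap (measurableSet_singleton _).compl
        fun y ↦ homogeneousKernel s Ω y * φ ‖y‖, restrict_compl_singleton]
    _ = ∫ y : ({0}ᶜ : Set E), (fun z : sphere (0 : E) 1 × Ioi (0 : ℝ) ↦
          Ω z.1 * ((z.2.1 ^ s)⁻¹ * φ z.2.1)) (homeomorphUnitSphereProd E y)
            ∂μ.comap Subtype.val := by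
      refine integral_congr_ae (ae_of_all _ fun y ↦ ?_)
      simp [homogeneousKernel, div_eq_mul_inv, mul_assoc]
    _ = (∫ θ : sphere (0 : E) 1, Ω θ ∂μ.toSphere) *
          ∫ r : Ioi (0 : ℝ), (r.1 ^ s)⁻¹ * φ r.1 ∂Measure.volumeIoiPow (finrank ℝ E - 1) := by
      rw [← integral_prod_mul (fun θ : sphere (0 : E) 1 ↦ Ω θ)
        fun r : Ioi (0 : ℝ) ↦ (r.1 ^ s)⁻¹ * φ r.1]
      exact μ.measurePreserving_homeomorphUnitSphereProd.integral_comp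
        (Homeomorph.measurableEmbedding _)
        fun z : sphere (0 : E) 1 × Ioi (0 : ℝ) ↦ Ω z.1 * ((z.2.1 ^ s)⁻¹ * φ z.2.1)
    _ = 0 := by rw [hΩ, zero_mul]

end Polar

/-! ### One-dimensional integrals and weighted means -/

section Means

theorem lintegral_Ioi_rpow_neg_one_sub {δ R : ℝ} (hδ : 0 < δ) (hR : 0 < R) :
    ∫⁻ r in Ioi R, ENNReal.ofReal (r ^ (-1 - δ)) = ENNReal.ofReal (R ^ (-δ) / δ) := by
  have hnonneg : ∀ᵐ r ∂volume.restrict (Ioi R), 0 ≤ r ^ (-1 - δ) := by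
    filter_upwards [ae_restrict_mem measurableSet_Ioi] with r hr
    exact Real.rpow_nonneg (hR.trans hr).le _
  rw [← ofReal_integral_eq_lintegral_ofReal (integrableOn_Ioi_rpow_of_lt (by linarith) hR) hnonneg,
    integral_Ioi_rpow_of_lt (by linarith) hR, show -1 - δ + 1 = -δ by ring, neg_div_neg_eq]

theorem lintegral_Ioc_zero_rpow {a R : ℝ} (ha : -1 < a) (hR : 0 ≤ R) :
    ∫⁻ r in Ioc 0 R, ENNReal.ofReal (r ^ a) = ENNReal.ofReal (R ^ (a + 1) / (a + 1)) := by
  have hint := intervalIntegral.intervalIntegrable_rpow' (a := 0) (b := R) ha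
  rw [intervalIntegrable_iff_integrableOn_Ioc_of_le hR] at hint
  have hnonneg : ∀ᵐ r ∂volume.restrict (Ioc 0 R), 0 ≤ r ^ a := by
    filter_upwards [ae_restrict_mem measurableSet_Ioc] with r hr
    exact Real.rpow_nonneg hr.1.le _
  rw [← ofReal_integral_eq_lintegral_ofReal hint hnonneg, ← intervalIntegral.integral_of_le hR,
    integral_rpow (Or.inl ha), Real.zero_rpow (by linarith), sub_zero]

theorem lintegral_Ioo_zero_one_rpow_lt_top {a : ℝ} (ha : -1 < a) :
    ∫⁻ t in Ioo (0 : ℝ) 1, ENNReal.ofReal (t ^ a) < ⊤ := by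
  have h := intervalIntegral.intervalIntegrable_rpow' (a := 0) (b := 1) ha
  rw [intervalIntegrable_iff_integrableOn_Ioo_of_le zero_le_one] at h
  exact h.lintegral_lt_top

theorem lintegral_Ioi_inter_Ioo_rpow_le {δ R s m : ℝ} (hδ : 0 < δ) (hR : 0 < R) (hs : 0 < s) :
    ∫⁻ r in Ioi R ∩ Ioo s (m * s), ENNReal.ofReal (r ^ (-1 - δ)) ≤
      ENNReal.ofReal ((m - 1) * R ^ (-δ)) := by
  have integrand_le (r : ℝ) (hr : r ∈ Ioi R ∩ Ioo s (m * s)) :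
      ENNReal.ofReal (r ^ (-1 - δ)) ≤ ENNReal.ofReal (R ^ (-δ) / s) := by
    obtain ⟨hRr : R < r, hsr, -⟩ := hr
    have hr : 0 < r := hR.trans hRr
    have : r ^ (-δ) ≤ R ^ (-δ) := Real.rpow_le_rpow_of_nonpos hR hRr.le (by linarith)
    rw [show -1 - δ = -δ - 1 by ring, Real.rpow_sub_one hr.ne']
    gcongr
  calc
    ∫⁻ r in Ioi R ∩ Ioo s (m * s), ENNReal.ofReal (r ^ (-1 - δ))
        ≤ ∫⁻ _r in Ioi R ∩ Ioo s (m * s), ENNReal.ofReal (R ^ (-δ) / s) :=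
      setLIntegral_mono' (measurableSet_Ioi.inter measurableSet_Ioo) integrand_le
    _ ≤ ∫⁻ _r in Ioo s (m * s), ENNReal.ofReal (R ^ (-δ) / s) :=
      lintegral_mono_set inter_subset_right
    _ = ENNReal.ofReal ((m - 1) * R ^ (-δ)) := by
      rw [setLIntegral_const, Real.volume_Ioo, ← ENNReal.ofReal_mul (by positivity)]
      congr 1
      field_simp

theorem lintegral_Ioi_inter_rpow_le {δ R s t : ℝ} (hδ : 0 < δ) (hR : 0 < R) (ht : 0 < t) :
    ∫⁻ r in Ioi R ∩ {r | s < r ∧ (1 - 2 * t) * r < s}, ENNReal.ofReal (r ^ (-1 - δ)) ≤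
      ENNReal.ofReal ((4 + 4 / δ) * t * R ^ (-δ)) := by
  rcases (Ioi R ∩ {r | s < r ∧ (1 - 2 * t) * r < s}).eq_empty_or_nonempty with hempty | hnonempty
  · simp [hempty]
  rcases le_or_gt (1 / 4) t with ht4 | ht4
  · have hmass : R ^ (-δ) / δ ≤ (4 + 4 / δ) * t * R ^ (-δ) := by
      have : 1 / δ ≤ 4 / δ * t := by
        rw [div_mul_eq_mul_div]
        gcongr
        linarith
      rw [div_eq_mul_one_div, mul_comm]
      gcongr
      nlinarith
    calc
      _ ≤ ∫⁻ r in Ioi R, ENNReal.ofReal (r ^ (-1 - δ)) := lintegral_mono_set inter_subset_left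
      _ ≤ _ := (lintegral_Ioi_rpow_neg_one_sub hδ hR).trans_le (ENNReal.ofReal_le_ofReal hmass)
  · have hsubset : Ioi R ∩ {r | s < r ∧ (1 - 2 * t) * r < s} ⊆
        Ioi R ∩ Ioo s ((1 - 2 * t)⁻¹ * s) := by
      rintro r ⟨hRr, hsr, hrs⟩
      exact ⟨hRr, hsr, (lt_inv_mul_iff₀ (by linarith)).2 hrs⟩
    have hs : 0 < s := by
      obtain ⟨r, hRr, -, hrs⟩ := hnonempty
      exact (mul_pos (by linarith) (hR.trans hRr)).trans hrs
    have hlength : (1 - 2 * t)⁻¹ - 1 ≤ (4 + 4 / δ) * t := by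
      have : (1 - 2 * t)⁻¹ ≤ 1 + 4 * t := by
        rw [inv_le_iff_one_le_mul₀ (by linarith)]
        nlinarith
      have : 0 ≤ 4 / δ * t := by positivity
      linarith
    calc
      _ ≤ ∫⁻ r in Ioi R ∩ Ioo s ((1 - 2 * t)⁻¹ * s), ENNReal.ofReal (r ^ (-1 - δ)) :=
        lintegral_mono_set hsubset
      _ ≤ ENNReal.ofReal (((1 - 2 * t)⁻¹ - 1) * R ^ (-δ)) :=
        lintegral_Ioi_inter_Ioo_rpow_le hδ hR hs
      _ ≤ _ := ENNReal.ofReal_le_ofReal (by gcongr)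

variable {X Y : Type*} [MeasurableSpace X] [MeasurableSpace Y]

theorem lintegral_le_rpow_lintegral_rpow_mul (ν : Measure X) {p : ℝ} (hp : 1 ≤ p) {F : X → ℝ≥0∞}
    (hF : Measurable F) :
    ∫⁻ x, F x ∂ν ≤ (∫⁻ x, F x ^ p ∂ν) ^ (1 / p) * ν univ ^ (1 - 1 / p) := by
  simpa [eLpNorm'] using
    eLpNorm'_le_eLpNorm'_mul_rpow_measure_univ one_pos hp hF.aestronglyMeasurable (μ := ν)

theorem lintegral_mul_le_rpow_lintegral_mul_rpow (ν : Measure X) {p : ℝ} (hp : 1 ≤ p)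
    {w F : X → ℝ≥0∞} (hw : Measurable w) (hF : Measurable F) :
    ∫⁻ x, w x * F x ∂ν ≤ (∫⁻ x, w x * F x ^ p ∂ν) ^ (1 / p) * (∫⁻ x, w x ∂ν) ^ (1 - 1 / p) := by
  simpa [lintegral_withDensity_eq_lintegral_mul _ hw hF, withDensity_apply _ MeasurableSet.univ,
    lintegral_withDensity_eq_lintegral_mul _ hw (hF.pow_const p)] using
    lintegral_le_rpow_lintegral_rpow_mul (ν.withDensity w) hp hF

theorem lintegral_rpow_le_lintegral_rpow (ν : Measure X) [IsProbabilityMeasure ν] {p : ℝ}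
    (hp : 1 ≤ p) {F : X → ℝ≥0∞} (hF : Measurable F) :
    (∫⁻ x, F x ∂ν) ^ p ≤ ∫⁻ x, F x ^ p ∂ν := by
  rw [← ENNReal.le_rpow_inv_iff (by linarith)]
  simpa using lintegral_le_rpow_lintegral_rpow_mul ν hp hF

theorem lintegral_mul_setLIntegral_comm (ν : Measure X) (μ : Measure Y) [SFinite ν] [SFinite μ]
    {A : Set (X × Y)} (hA : MeasurableSet A) {w : X → ℝ≥0∞} (hw : Measurable w) {G : Y → ℝ≥0∞}
    (hG : Measurable G) :
    ∫⁻ x, w x * ∫⁻ y in {y | (x, y) ∈ A}, G y ∂μ ∂ν =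
      ∫⁻ y, G y * ∫⁻ x in {x | (x, y) ∈ A}, w x ∂ν ∂μ := by
  have hleft (x : X) : w x * ∫⁻ y in {y | (x, y) ∈ A}, G y ∂μ =
      ∫⁻ y, A.indicator (fun z ↦ w z.1 * G z.2) (x, y) ∂μ := by
    rw [← lintegral_const_mul _ hG]
    exact (lintegral_indicator (measurable_prodMk_left hA) _).symm
  have hright (y : Y) : G y * ∫⁻ x in {x | (x, y) ∈ A}, w x ∂ν =
      ∫⁻ x, A.indicator (fun z ↦ w z.1 * G z.2) (x, y) ∂ν := by
    rw [mul_comm, ← lintegral_mul_const _ hw]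
    exact (lintegral_indicator (measurable_prodMk_right hA) _).symm
  simp_rw [hleft, hright]
  exact lintegral_lintegral_swap
    (((hw.comp measurable_fst).mul (hG.comp measurable_snd)).indicator hA).aemeasurable

end Means

/-! ### Differences between values and ball averages along a ray -/

section BallAverage

open Module

section Segment

variable {E F : Type*} [NormedAddCommGroup E] [NormedSpace ℝ E] [NormedAddCommGroup F]
  [NormedSpace ℝ F] [CompleteSpace F]

theorem enorm_sub_le_lintegral_enorm_fderiv {f : E → F} (hf : ContDiff ℝ 1 f) (a b : E) :
    ‖f b - f a‖ₑ ≤ ‖b - a‖ₑ * ∫⁻ t in Ioo (0 : ℝ) 1, ‖fderiv ℝ f (a + t • (b - a))‖ₑ := by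
  have hline (t : ℝ) : HasDerivAt (fun t : ℝ ↦ a + t • (b - a)) (b - a) t := by
    simpa using ((hasDerivAt_id t).smul_const (b - a)).const_add a
  have hderiv (t : ℝ) : HasDerivAt (fun t : ℝ ↦ f (a + t • (b - a)))
      (fderiv ℝ f (a + t • (b - a)) (b - a)) t :=
    (hf.differentiable one_ne_zero _).hasFDerivAt.comp_hasDerivAt t (hline t)
  have hcont : Continuous fun t : ℝ ↦ fderiv ℝ f (a + t • (b - a)) (b - a) :=
    ((hf.continuous_fderiv one_ne_zero).comp (by fun_prop)).clm_apply continuous_const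
  have hftc : f b - f a = ∫ t in Ioo (0 : ℝ) 1, fderiv ℝ f (a + t • (b - a)) (b - a) := by
    rw [restrict_Ioo_eq_restrict_Ioc, ← intervalIntegral.integral_of_le zero_le_one,
      intervalIntegral.integral_eq_sub_of_hasDerivAt (fun t _ ↦ hderiv t)
        (hcont.intervalIntegrable 0 1)]
    simp
  calc
    ‖f b - f a‖ₑ ≤ ∫⁻ t in Ioo (0 : ℝ) 1, ‖fderiv ℝ f (a + t • (b - a)) (b - a)‖ₑ :=
      hftc ▸ enorm_integral_le_lintegral_enorm _
    _ ≤ ∫⁻ t in Ioo (0 : ℝ) 1, ‖b - a‖ₑ * ‖fderiv ℝ f (a + t • (b - a))‖ₑ :=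
      lintegral_mono fun t ↦ (ContinuousLinearMap.le_opENorm _ _).trans_eq (mul_comm _ _)
    _ = _ := lintegral_const_mul' _ _ enorm_ne_top

end Segment

variable {E : Type*} [NormedAddCommGroup E] [NormedSpace ℝ E]

theorem norm_lt_and_lt_norm_of_mem_ball_smul {θ y : E} (hθ : ‖θ‖ = 1) {r t : ℝ} (hr : 0 ≤ r)
    (ht : t ≤ 1) (hy : y ∈ ball ((r * (1 - t)) • θ) (r * t)) :
    ‖y‖ < r ∧ (1 - 2 * t) * r < ‖y‖ := by
  have hcenter : ‖(r * (1 - t)) • θ‖ = r * (1 - t) := by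
    rw [norm_smul, hθ, mul_one, Real.norm_of_nonneg (mul_nonneg hr (by linarith))]
  have hdist := (abs_norm_sub_norm_le y ((r * (1 - t)) • θ)).trans_lt (mem_ball_iff_norm.1 hy)
  rw [hcenter, abs_lt] at hdist
  constructor <;> linarith

theorem enorm_sub_smul_sub_le {f : E → ℝ} (hf : ContDiff ℝ 1 f) {θ v : E} (hθ : ‖θ‖ = 1)
    (hv : ‖v‖ < 1) (x : E) {r : ℝ} (hr : 0 ≤ r) :
    ‖f (x - r • θ) - f (x - r • v)‖ₑ ≤ ENNReal.ofReal (2 * r) *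
      ∫⁻ t in Ioo (0 : ℝ) 1, ‖fderiv ℝ f (x - r • ((1 - t) • θ + t • v))‖ₑ := by
  have hpath (t : ℝ) : x - r • θ + t • (x - r • v - (x - r • θ)) =
      x - r • ((1 - t) • θ + t • v) := by module
  have hlength : ‖x - r • v - (x - r • θ)‖ₑ ≤ ENNReal.ofReal (2 * r) := by
    rw [show x - r • v - (x - r • θ) = r • (θ - v) by module, ← ofReal_norm, norm_smul,
      Real.norm_of_nonneg hr]
    refine ENNReal.ofReal_le_ofReal ?_
    nlinarith [norm_sub_le θ v]
  have hseg := enorm_sub_le_lintegral_enorm_fderiv hf (x - r • θ) (x - r • v)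
  simp only [hpath] at hseg
  rw [enorm_sub_rev]
  exact hseg.trans (mul_le_mul' hlength le_rfl)

variable [MeasurableSpace E]

/-- The uniform probability measure on the unit ball, the averaging measure of
`scaledBallAverage`. -/
def unitBallMeasure (μ : Measure E) : Measure E :=
  ProbabilityTheory.cond μ (ball 0 1)

/-- The mean of `f` over the ball of radius `|r|` about `x`, written over the unit ball so that it
depends measurably on `r`. -/
def scaledBallAverage (μ : Measure E) (f : E → ℝ) (x : E) (r : ℝ) : ℝ :=
  ∫ v, f (x - r • v) ∂unitBallMeasure μ

variable [FiniteDimensional ℝ E] (μ : Measure E) [μ.IsAddHaarMeasure]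

instance : IsProbabilityMeasure (unitBallMeasure μ) :=
  ProbabilityTheory.cond_isProbabilityMeasure_of_finite (measure_ball_pos μ 0 one_pos).ne'
    measure_ball_lt_top.ne

theorem abs_scaledBallAverage_le {f : E → ℝ} {A : ℝ} (hA : ∀ x, |f x| ≤ A) (x : E) (r : ℝ) :
    |scaledBallAverage μ f x r| ≤ A := by
  simpa [scaledBallAverage] using norm_integral_le_of_norm_le_const
    (μ := unitBallMeasure μ) (f := fun v ↦ f (x - r • v)) (ae_of_all _ fun v ↦ hA _)

variable [BorelSpace E]

theorem setLIntegral_ball_comp_add_smul {s : ℝ} (hs : 0 < s) (a : E) (G : E → ℝ≥0∞) :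
    ∫⁻ v in ball 0 1, G (a + s • v) ∂μ =
      ENNReal.ofReal (s ^ finrank ℝ E)⁻¹ * ∫⁻ y in ball a s, G y ∂μ := by
  have hemb : MeasurableEmbedding fun v : E ↦ a + s • v :=
    ((Homeomorph.smulOfNeZero s hs.ne').trans (Homeomorph.addLeft a)).measurableEmbedding
  have hmap : μ.map (fun v ↦ a + s • v) = ENNReal.ofReal (s ^ finrank ℝ E)⁻¹ • μ := by
    calc
      μ.map (fun v ↦ a + s • v) = (μ.map (s • ·)).map (a + ·) :=
        (Measure.map_map (by fun_prop) (by fun_prop)).symm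
      _ = _ := by
        rw [Measure.map_addHaar_smul μ hs.ne', Measure.map_smul, map_add_left_eq_self,
          abs_of_pos (by positivity)]
  have hpre : (fun v : E ↦ a + s • v) ⁻¹' ball a s = ball 0 1 := by
    ext v
    simp [norm_smul, abs_of_pos hs, hs]
  rw [← hpre, ← hemb.lintegral_map, ← hemb.restrict_map, hmap, Measure.restrict_smul,
    lintegral_smul_measure, smul_eq_mul]

theorem ofReal_pow_mul_lintegral_unitBallMeasure {r t : ℝ} (hr : 0 < r) (ht : 0 < t) (θ : E)
    (G : E → ℝ≥0∞) :
    ENNReal.ofReal (r ^ finrank ℝ E) * ∫⁻ v, G (r • ((1 - t) • θ + t • v)) ∂unitBallMeasure μ =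
      (μ (ball 0 1))⁻¹ * ENNReal.ofReal (t ^ finrank ℝ E)⁻¹ *
        ∫⁻ y in ball ((r * (1 - t)) • θ) (r * t), G y ∂μ := by
  have hscale : ENNReal.ofReal (r ^ finrank ℝ E) * ENNReal.ofReal ((r * t) ^ finrank ℝ E)⁻¹ =
      ENNReal.ofReal (t ^ finrank ℝ E)⁻¹ := by
    rw [← ENNReal.ofReal_mul (by positivity), mul_pow]
    congr 1
    field_simp
  simp only [smul_add, smul_smul]
  rw [unitBallMeasure, ProbabilityTheory.cond, lintegral_smul_measure, smul_eq_mul,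
    setLIntegral_ball_comp_add_smul μ (mul_pos hr ht), ← hscale]
  ring

theorem lintegral_Ioi_rpow_mul_lintegral_unitBallMeasure_le {δ R t : ℝ} (hδ : 0 < δ) (hR : 0 < R)
    (ht : t ∈ Ioo (0 : ℝ) 1) {θ : E} (hθ : ‖θ‖ = 1) {G : E → ℝ≥0∞} (hG : Measurable G) :
    ∫⁻ r in Ioi R, ENNReal.ofReal (r ^ (-1 - δ)) * (ENNReal.ofReal (r ^ finrank ℝ E) *
        ∫⁻ v, G (r • ((1 - t) • θ + t • v)) ∂unitBallMeasure μ) ≤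
      (μ (ball 0 1))⁻¹ * ENNReal.ofReal (t ^ finrank ℝ E)⁻¹ *
        (ENNReal.ofReal ((4 + 4 / δ) * t * R ^ (-δ)) * ∫⁻ y, G y ∂μ) := by
  have htube : MeasurableSet {z : ℝ × E | z.2 ∈ ball ((z.1 * (1 - t)) • θ) (z.1 * t)} :=
    measurableSet_lt (f := fun z : ℝ × E ↦ dist z.2 ((z.1 * (1 - t)) • θ)) (by fun_prop)
      (by fun_prop)
  have fiber_le (y : E) :
      ∫⁻ r in {r | y ∈ ball ((r * (1 - t)) • θ) (r * t)}, ENNReal.ofReal (r ^ (-1 - δ))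
        ∂volume.restrict (Ioi R) ≤ ENNReal.ofReal ((4 + 4 / δ) * t * R ^ (-δ)) := by
    have hfiber : MeasurableSet {r | y ∈ ball ((r * (1 - t)) • θ) (r * t)} :=
      htube.preimage (by fun_prop : Measurable fun r : ℝ ↦ (r, y))
    rw [Measure.restrict_restrict hfiber, inter_comm]
    refine le_trans (lintegral_mono_set ?_) (lintegral_Ioi_inter_rpow_le (s := ‖y‖) hδ hR ht.1)
    exact fun r hr ↦ ⟨hr.1,
      norm_lt_and_lt_norm_of_mem_ball_smul hθ (hR.trans hr.1).le ht.2.le hr.2⟩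
  calc
    _ = ∫⁻ r in Ioi R, (μ (ball 0 1))⁻¹ * ENNReal.ofReal (t ^ finrank ℝ E)⁻¹ *
          (ENNReal.ofReal (r ^ (-1 - δ)) * ∫⁻ y in ball ((r * (1 - t)) • θ) (r * t), G y ∂μ) := by
      refine setLIntegral_congr_fun measurableSet_Ioi fun r hr ↦ ?_
      simp only [ofReal_pow_mul_lintegral_unitBallMeasure μ (hR.trans hr) ht.1]
      ring
    _ = (μ (ball 0 1))⁻¹ * ENNReal.ofReal (t ^ finrank ℝ E)⁻¹ *
          ∫⁻ y, G y * ∫⁻ r in {r | y ∈ ball ((r * (1 - t)) • θ) (r * t)},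
            ENNReal.ofReal (r ^ (-1 - δ)) ∂volume.restrict (Ioi R) ∂μ := by
      rw [lintegral_const_mul' _ _ (ENNReal.mul_ne_top
        (ENNReal.inv_ne_top.2 (measure_ball_pos μ 0 one_pos).ne') ENNReal.ofReal_ne_top)]
      exact congrArg _ (lintegral_mul_setLIntegral_comm _ μ htube (by fun_prop) hG)
    _ ≤ _ := by
      rw [mul_comm (ENNReal.ofReal ((4 + 4 / δ) * t * R ^ (-δ))), ← lintegral_mul_const _ hG]
      gcongr with y
      exact fiber_le y

theorem lintegral_Ioi_rpow_mul_rpow_lintegral_unitBallMeasure_le {p δ R t : ℝ} (hp : 1 ≤ p)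
    (hδ : 0 < δ) (hR : 0 < R) (ht : t ∈ Ioo (0 : ℝ) 1) {θ : E} (hθ : ‖θ‖ = 1) {g : E → ℝ≥0∞}
    (hg : Measurable g) (x : E) :
    ∫⁻ r in Ioi R, ENNReal.ofReal (r ^ (-1 - δ)) * (ENNReal.ofReal (r ^ (finrank ℝ E / p)) *
        ∫⁻ v, g (x - r • ((1 - t) • θ + t • v)) ∂unitBallMeasure μ) ^ p ≤
      (μ (ball 0 1))⁻¹ * ENNReal.ofReal (t ^ finrank ℝ E)⁻¹ *
        (ENNReal.ofReal ((4 + 4 / δ) * t * R ^ (-δ)) * ∫⁻ y, g y ^ p ∂μ) := by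
  have hp0 : 0 < p := by linarith
  rw [← lintegral_sub_left_eq_self (fun y ↦ g y ^ p) x]
  refine le_trans (setLIntegral_mono' measurableSet_Ioi fun r hr ↦ ?_)
    (lintegral_Ioi_rpow_mul_lintegral_unitBallMeasure_le μ hδ hR ht hθ
      (G := fun y ↦ g (x - y) ^ p) ((hg.comp (by fun_prop)).pow_const p))
  have hr0 : 0 < r := hR.trans hr
  rw [ENNReal.mul_rpow_of_nonneg _ _ hp0.le, ENNReal.ofReal_rpow_of_pos (by positivity),
    ← Real.rpow_mul hr0.le, div_mul_cancel₀ _ hp0.ne', Real.rpow_natCast]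
  gcongr
  exact lintegral_rpow_le_lintegral_rpow _ hp (hg.comp (by fun_prop))

theorem lintegral_Ioi_rpow_mul_lintegral_unitBallMeasure_sub_le {p δ R t : ℝ} (hp : 1 ≤ p)
    (hδ : 0 < δ) (hR : 0 < R) (ht : t ∈ Ioo (0 : ℝ) 1) {θ : E} (hθ : ‖θ‖ = 1) {g : E → ℝ≥0∞}
    (hg : Measurable g) (x : E) :
    ∫⁻ r in Ioi R, ENNReal.ofReal (r ^ (finrank ℝ E / p - 1 - δ)) *
        ∫⁻ v, g (x - r • ((1 - t) • θ + t • v)) ∂unitBallMeasure μ ≤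
      ((μ (ball 0 1))⁻¹ * ENNReal.ofReal (4 + 4 / δ)) ^ (1 / p) *
        ENNReal.ofReal (1 / δ) ^ (1 - 1 / p) * ENNReal.ofReal (t ^ ((1 - finrank ℝ E) / p)) *
        ENNReal.ofReal (R ^ (-δ)) * (∫⁻ y, g y ^ p ∂μ) ^ (1 / p) := by
  have hp0 : 0 < 1 / p := by positivity
  have hp1 : 0 ≤ 1 - 1 / p := sub_nonneg.2 ((div_le_one (by linarith)).2 hp)
  have ht0 : 0 < t := ht.1
  have : Measurable fun r ↦ ∫⁻ v, g (x - r • ((1 - t) • θ + t • v)) ∂unitBallMeasure μ :=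
    (hg.comp (by fun_prop : Measurable fun z : ℝ × E ↦
      x - z.1 • ((1 - t) • θ + t • z.2))).lintegral_prod_right'
  have hRsplit : ENNReal.ofReal (R ^ (-δ)) =
      ENNReal.ofReal (R ^ (-δ)) ^ (1 / p) * ENNReal.ofReal (R ^ (-δ)) ^ (1 - 1 / p) := by
    rw [← ENNReal.rpow_add_of_nonneg _ _ hp0.le hp1, add_sub_cancel, ENNReal.rpow_one]
  have htsplit : ENNReal.ofReal (t ^ ((1 - finrank ℝ E) / p)) =
      ENNReal.ofReal (t ^ finrank ℝ E)⁻¹ ^ (1 / p) * ENNReal.ofReal t ^ (1 / p) := by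
    rw [← ENNReal.mul_rpow_of_nonneg _ _ hp0.le, ← ENNReal.ofReal_mul (by positivity),
      ENNReal.ofReal_rpow_of_pos (by positivity), ← Real.rpow_natCast, ← Real.rpow_neg ht0.le,
      ← Real.rpow_add_one ht0.ne', ← Real.rpow_mul ht0.le]
    ring_nf
  calc
    _ = ∫⁻ r in Ioi R, ENNReal.ofReal (r ^ (-1 - δ)) * (ENNReal.ofReal (r ^ (finrank ℝ E / p)) *
          ∫⁻ v, g (x - r • ((1 - t) • θ + t • v)) ∂unitBallMeasure μ) := by
      refine setLIntegral_congr_fun measurableSet_Ioi fun r hr ↦ ?_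
      have hr0 : 0 < r := hR.trans hr
      rw [← mul_assoc, ← ENNReal.ofReal_mul (by positivity), ← Real.rpow_add hr0]
      ring_nf
    _ ≤ _ := lintegral_mul_le_rpow_lintegral_mul_rpow _ hp (by fun_prop) (by fun_prop)
    _ ≤ _ := by
      grw [lintegral_Ioi_rpow_mul_rpow_lintegral_unitBallMeasure_le μ hp hδ hR ht hθ hg x,
        lintegral_Ioi_rpow_neg_one_sub hδ hR]
      refine le_of_eq ?_
      rw [htsplit, hRsplit, div_eq_mul_one_div (R ^ (-δ))]
      simp only [ENNReal.mul_rpow_of_nonneg, hp0.le, hp1, ENNReal.ofReal_mul (show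
        (0 : ℝ) ≤ (4 + 4 / δ) * t by positivity), ENNReal.ofReal_mul (show
        (0 : ℝ) ≤ 4 + 4 / δ by positivity), ENNReal.ofReal_mul (Real.rpow_nonneg hR.le (-δ))]
      ring

theorem exists_lintegral_Ioo_lintegral_Ioi_rpow_mul_le {p δ : ℝ} (hp : 1 ≤ p)
    (hdp : (finrank ℝ E : ℝ) - 1 < p) (hδ : 0 < δ) :
    ∃ C : ℝ≥0∞, C ≠ ⊤ ∧ ∀ θ : E, ‖θ‖ = 1 → ∀ R : ℝ, 0 < R → ∀ g : E → ℝ≥0∞, Measurable g →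
      ∀ x : E, ∫⁻ t in Ioo (0 : ℝ) 1, ∫⁻ r in Ioi R,
        ENNReal.ofReal (r ^ (finrank ℝ E / p - 1 - δ)) *
          ∫⁻ v, g (x - r • ((1 - t) • θ + t • v)) ∂unitBallMeasure μ ≤
        C * ENNReal.ofReal (R ^ (-δ)) * (∫⁻ y, g y ^ p ∂μ) ^ (1 / p) := by
  have hball : (μ (ball 0 1))⁻¹ ≠ ⊤ := ENNReal.inv_ne_top.2 (measure_ball_pos μ 0 one_pos).ne'
  have hsing : ∫⁻ t in Ioo (0 : ℝ) 1, ENNReal.ofReal (t ^ ((1 - finrank ℝ E) / p)) < ⊤ :=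
    lintegral_Ioo_zero_one_rpow_lt_top ((lt_div_iff₀ (by linarith)).2 (by linarith))
  refine ⟨((μ (ball 0 1))⁻¹ * ENNReal.ofReal (4 + 4 / δ)) ^ (1 / p) *
    ENNReal.ofReal (1 / δ) ^ (1 - 1 / p) *
    ∫⁻ t in Ioo (0 : ℝ) 1, ENNReal.ofReal (t ^ ((1 - finrank ℝ E) / p)), by finiteness,
    fun θ hθ R hR g hg x ↦ ?_⟩
  refine (setLIntegral_mono' measurableSet_Ioo fun t ht ↦
    lintegral_Ioi_rpow_mul_lintegral_unitBallMeasure_sub_le μ hp hδ hR ht hθ hg x).trans_eq ?_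
  simp_rw [mul_right_comm _ (ENNReal.ofReal (_ ^ ((1 - finrank ℝ E) / p)))]
  rw [lintegral_const_mul _ (by fun_prop)]
  ring

theorem measurable_scaledBallAverage {f : E → ℝ} (hf : Continuous f) (x : E) :
    Measurable (scaledBallAverage μ f x) :=
  (hf.comp (by fun_prop : Continuous fun z : ℝ × E ↦
    x - z.1 • z.2)).stronglyMeasurable.integral_prod_right'.measurable

theorem enorm_sub_scaledBallAverage_le {f : E → ℝ} (hf : ContDiff ℝ 1 f) {A : ℝ}
    (hA : ∀ x, |f x| ≤ A) {θ : E} (hθ : ‖θ‖ = 1) (x : E) {r : ℝ} (hr : 0 ≤ r) :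
    ‖f (x - r • θ) - scaledBallAverage μ f x r‖ₑ ≤ ENNReal.ofReal (2 * r) *
      ∫⁻ t in Ioo (0 : ℝ) 1, ∫⁻ v, ‖fderiv ℝ f (x - r • ((1 - t) • θ + t • v))‖ₑ
        ∂unitBallMeasure μ := by
  have : Continuous (fderiv ℝ f) := hf.continuous_fderiv one_ne_zero
  have hint : Integrable (fun v ↦ f (x - r • v)) (unitBallMeasure μ) :=
    .of_bound (hf.continuous.comp (by fun_prop)).aestronglyMeasurable A (ae_of_all _ fun v ↦ hA _)
  have hdiff : f (x - r • θ) - scaledBallAverage μ f x r =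
      ∫ v, f (x - r • θ) - f (x - r • v) ∂unitBallMeasure μ := by
    simp [integral_sub (integrable_const _) hint, scaledBallAverage]
  have hball : ∀ᵐ v ∂unitBallMeasure μ, v ∈ ball (0 : E) 1 :=
    ProbabilityTheory.ae_cond_mem measurableSet_ball
  calc
    _ ≤ ∫⁻ v, ‖f (x - r • θ) - f (x - r • v)‖ₑ ∂unitBallMeasure μ :=
      hdiff ▸ enorm_integral_le_lintegral_enorm _
    _ ≤ ∫⁻ v, ENNReal.ofReal (2 * r) * (∫⁻ t in Ioo (0 : ℝ) 1,
          ‖fderiv ℝ f (x - r • ((1 - t) • θ + t • v))‖ₑ) ∂unitBallMeasure μ := by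
      refine lintegral_mono_ae ?_
      filter_upwards [hball] with v hv
      exact enorm_sub_smul_sub_le hf hθ (by simpa using hv) x hr
    _ = _ := by
      rw [lintegral_const_mul' _ _ ENNReal.ofReal_ne_top, lintegral_lintegral_swap]
      exact Continuous.aemeasurable (by fun_prop)

theorem exists_lintegral_Ioi_rpow_mul_enorm_sub_scaledBallAverage_le {p δ : ℝ} (hp : 1 ≤ p)
    (hdp : (finrank ℝ E : ℝ) - 1 < p) (hδ : 0 < δ) :
    ∃ C : ℝ≥0∞, C ≠ ⊤ ∧ ∀ θ : E, ‖θ‖ = 1 → ∀ R : ℝ, 0 < R →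
      ∀ f : E → ℝ, ContDiff ℝ 1 f → ∀ A : ℝ, (∀ x, |f x| ≤ A) → ∀ x : E,
        ∫⁻ r in Ioi R, ENNReal.ofReal (r ^ (finrank ℝ E / p - 2 - δ)) *
          ‖f (x - r • θ) - scaledBallAverage μ f x r‖ₑ ≤
        C * ENNReal.ofReal (R ^ (-δ)) * (∫⁻ y, ‖fderiv ℝ f y‖ₑ ^ p ∂μ) ^ (1 / p) := by
  obtain ⟨C, hC, hray⟩ := exists_lintegral_Ioo_lintegral_Ioi_rpow_mul_le μ hp hdp hδ
  refine ⟨2 * C, by finiteness, fun θ hθ R hR f hf A hA x ↦ ?_⟩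
  have hdf : Continuous (fderiv ℝ f) := hf.continuous_fderiv one_ne_zero
  have hmeas : Measurable fun z : ℝ × ℝ ↦ ∫⁻ v,
      ‖fderiv ℝ f (x - z.1 • ((1 - z.2) • θ + z.2 • v))‖ₑ ∂unitBallMeasure μ :=
    Measurable.lintegral_prod_right' (f := fun z : (ℝ × ℝ) × E ↦
      ‖fderiv ℝ f (x - z.1.1 • ((1 - z.1.2) • θ + z.1.2 • z.2))‖ₑ)
      (Continuous.measurable (by fun_prop))
  have weight_mul {r : ℝ} (hr : 0 < r) : ENNReal.ofReal (r ^ (finrank ℝ E / p - 2 - δ)) *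
      ENNReal.ofReal (2 * r) = 2 * ENNReal.ofReal (r ^ (finrank ℝ E / p - 1 - δ)) := by
    rw [← ENNReal.ofReal_ofNat 2, ← ENNReal.ofReal_mul (by positivity),
      ← ENNReal.ofReal_mul zero_le_two, show finrank ℝ E / p - 1 - δ =
        finrank ℝ E / p - 2 - δ + 1 by ring, Real.rpow_add_one hr.ne']
    ring_nf
  calc
    _ ≤ ∫⁻ r in Ioi R, 2 * ∫⁻ t in Ioo (0 : ℝ) 1, ENNReal.ofReal (r ^ (finrank ℝ E / p - 1 - δ)) *
          ∫⁻ v, ‖fderiv ℝ f (x - r • ((1 - t) • θ + t • v))‖ₑ ∂unitBallMeasure μ := by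
      refine setLIntegral_mono' measurableSet_Ioi fun r hr ↦ ?_
      have hr0 : 0 < r := hR.trans hr
      rw [lintegral_const_mul' _ _ ENNReal.ofReal_ne_top, ← mul_assoc, ← weight_mul hr0, mul_assoc]
      gcongr
      exact enorm_sub_scaledBallAverage_le μ hf hA hθ x hr0.le
    _ = 2 * ∫⁻ t in Ioo (0 : ℝ) 1, ∫⁻ r in Ioi R, ENNReal.ofReal (r ^ (finrank ℝ E / p - 1 - δ)) *
          ∫⁻ v, ‖fderiv ℝ f (x - r • ((1 - t) • θ + t • v))‖ₑ ∂unitBallMeasure μ := by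
      rw [lintegral_const_mul' _ _ (by finiteness), lintegral_lintegral_swap]
      exact ((by fun_prop : Measurable fun z : ℝ × ℝ ↦
        ENNReal.ofReal (z.1 ^ (finrank ℝ E / p - 1 - δ))).mul hmeas).aemeasurable
    _ ≤ _ := by
      grw [hray θ hθ R hR _ hdf.enorm.measurable x]
      exact le_of_eq (by ring)

end BallAverage

/-! ### Principal values of homogeneous kernels -/

section PrincipalValue

open Module

theorem tendsto_setIntegral_lt_norm {E : Type*} [NormedAddCommGroup E] [MeasurableSpace E]
    [BorelSpace E] {μ : Measure E} [NullSingletonClass μ] {G : E → ℝ} (hG : Integrable G μ) :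
    Tendsto (fun ε : ℝ ↦ ∫ y in {y | ε < ‖y‖}, G y ∂μ) (𝓝[>] 0) (𝓝 (∫ y, G y ∂μ)) := by
  have hcover : AECover μ (𝓝[>] 0) fun ε : ℝ ↦ {y : E | ε < ‖y‖} :=
    { ae_eventually_mem := by
        filter_upwards [compl_mem_ae_iff.2 (measure_singleton (μ := μ) 0)] with y hy
        exact mem_nhdsWithin_of_mem_nhds (Iio_mem_nhds (norm_pos_iff.2 hy))
      measurableSet := fun ε ↦ measurableSet_lt measurable_const measurable_norm }
  exact hcover.integral_tendsto_of_countably_generated hG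

variable {E : Type*} [NormedAddCommGroup E] [NormedSpace ℝ E] [FiniteDimensional ℝ E]
  [Nontrivial E] [MeasurableSpace E] [BorelSpace E] (μ : Measure E) [μ.IsAddHaarMeasure]

theorem lintegral_Ioi_rpow_mul_enorm_le {a A B : ℝ} {h : ℝ → ℝ} (hA : ∀ r > 0, |h r| ≤ A * r)
    (hB : ∀ r, |h r| ≤ B) :
    ∫⁻ r in Ioi 0, ENNReal.ofReal (r ^ a) * ‖h r‖ₑ ≤
      ENNReal.ofReal A * (∫⁻ r in Ioo 0 1, ENNReal.ofReal (r ^ (a + 1))) +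
        ENNReal.ofReal B * ∫⁻ r in Ioi (1 / 2), ENNReal.ofReal (r ^ a) := by
  have near (r : ℝ) (hr : r ∈ Ioo (0 : ℝ) 1) : ENNReal.ofReal (r ^ a) * ‖h r‖ₑ ≤
      ENNReal.ofReal A * ENNReal.ofReal (r ^ (a + 1)) := by
    obtain ⟨hr, -⟩ := hr
    have : 0 < r ^ a := by positivity
    rw [Real.enorm_eq_ofReal_abs, ← ENNReal.ofReal_mul this.le, ← ENNReal.ofReal_mul'
      (by positivity), Real.rpow_add_one hr.ne', mul_left_comm]
    gcongr
    exact hA r hr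
  have far (r : ℝ) : ENNReal.ofReal (r ^ a) * ‖h r‖ₑ ≤
      ENNReal.ofReal B * ENNReal.ofReal (r ^ a) := by
    rw [Real.enorm_eq_ofReal_abs, mul_comm]
    gcongr
    exact hB r
  have hcover : Ioi (0 : ℝ) ⊆ Ioo 0 1 ∪ Ioi (1 / 2) := fun r hr ↦
    (lt_or_ge r 1).imp (fun h ↦ ⟨hr, h⟩) fun h ↦ lt_of_lt_of_le (by norm_num) h
  rw [← lintegral_const_mul' _ _ ENNReal.ofReal_ne_top,
    ← lintegral_const_mul' _ _ ENNReal.ofReal_ne_top]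
  calc
    _ ≤ _ := (lintegral_mono_set hcover).trans (lintegral_union_le _ _ _)
    _ ≤ _ := add_le_add (setLIntegral_mono' measurableSet_Ioo near) (lintegral_mono far)

variable {s : ℝ} {Ω : E → ℝ}

theorem integrable_homogeneousKernel_mul (hds : (finrank ℝ E : ℝ) < s)
    (hsd : s < finrank ℝ E + 1) (hΩ : Measurable Ω)
    (hΩi : Integrable (fun θ : sphere (0 : E) 1 ↦ Ω θ) μ.toSphere) {H : E → ℝ} (hH : Measurable H)
    {A B : ℝ} (hA : ∀ y, |H y| ≤ A * ‖y‖) (hB : ∀ y, |H y| ≤ B) :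
    Integrable (fun y ↦ homogeneousKernel s Ω y * H y) μ := by
  have hK : Measurable (homogeneousKernel s Ω) := measurable_homogeneousKernel s hΩ
  refine ⟨(hK.mul hH).aestronglyMeasurable, ?_⟩
  set a : ℝ := (finrank ℝ E : ℝ) - 1 - s
  have hnear : ∫⁻ r in Ioo (0 : ℝ) 1, ENNReal.ofReal (r ^ (a + 1)) < ⊤ :=
    lintegral_Ioo_zero_one_rpow_lt_top (by linarith)
  have hfar : ∫⁻ r in Ioi (1 / 2 : ℝ), ENNReal.ofReal (r ^ a) < ⊤ :=
    (integrableOn_Ioi_rpow_of_lt (by linarith) (by norm_num)).lintegral_lt_top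
  have ray_le (θ : E) (hθ : θ ∈ sphere (0 : E) 1) :
      ∫⁻ r in Ioi 0, ENNReal.ofReal (r ^ a) * ‖H (r • θ)‖ₑ ≤ _ :=
    lintegral_Ioi_rpow_mul_enorm_le (fun r hr ↦ by
      simpa [norm_smul, norm_eq_of_mem_sphere ⟨θ, hθ⟩, abs_of_pos hr] using hA (r • θ))
      fun r ↦ hB (r • θ)
  simp only [HasFiniteIntegral, enorm_mul]
  refine (lintegral_enorm_homogeneousKernel_mul_le μ s hΩ hH.enorm ray_le).trans_lt
    (ENNReal.mul_lt_top hΩi.2 ?_)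
  finiteness

theorem integrableOn_homogeneousKernel_mul (hds : (finrank ℝ E : ℝ) < s)
    (hsd : s < finrank ℝ E + 1) (hΩ : Measurable Ω)
    (hΩi : Integrable (fun θ : sphere (0 : E) 1 ↦ Ω θ) μ.toSphere) {H : E → ℝ} (hH : Measurable H)
    {B : ℝ} (hB : ∀ y, |H y| ≤ B) {ε : ℝ} (hε : 0 < ε) :
    IntegrableOn (fun y ↦ homogeneousKernel s Ω y * H y) {y | ε < ‖y‖} μ := by
  have hset : MeasurableSet {y : E | ε < ‖y‖} := measurableSet_lt measurable_const measurable_norm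
  have hB₀ : 0 ≤ B := (abs_nonneg _).trans (hB 0)
  have hind (y : E) : |indicator {y | ε < ‖y‖} H y| ≤ B / ε * ‖y‖ ∧
      |indicator {y | ε < ‖y‖} H y| ≤ B := by
    by_cases hy : ε < ‖y‖
    · have : B ≤ B / ε * ‖y‖ := by
        rw [div_mul_eq_mul_div, le_div_iff₀ hε]
        gcongr
      simpa [indicator, hy] using ⟨(hB y).trans this, hB y⟩
    · simpa [indicator, hy] using ⟨by positivity, hB₀⟩
  rw [← integrable_indicator_iff hset]
  simpa only [← indicator_mul_right] using integrable_homogeneousKernel_mul μ hds hsd hΩ hΩi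
    (hH.indicator hset) (fun y ↦ (hind y).1) fun y ↦ (hind y).2

theorem setIntegral_homogeneousKernel_mul_sub_comp_norm (hds : (finrank ℝ E : ℝ) < s)
    (hsd : s < finrank ℝ E + 1) (hΩ : Measurable Ω)
    (hΩi : Integrable (fun θ : sphere (0 : E) 1 ↦ Ω θ) μ.toSphere)
    (hΩ₀ : ∫ θ : sphere (0 : E) 1, Ω θ ∂μ.toSphere = 0) {F : E → ℝ} (hF : Measurable F)
    {φ : ℝ → ℝ} (hφ : Measurable φ) {B : ℝ} (hFB : ∀ y, |F y| ≤ B) (hφB : ∀ r, |φ r| ≤ B) {ε : ℝ}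
    (hε : 0 < ε) :
    ∫ y in {y | ε < ‖y‖}, homogeneousKernel s Ω y * (F y - φ ‖y‖) ∂μ =
      ∫ y in {y | ε < ‖y‖}, homogeneousKernel s Ω y * F y ∂μ := by
  have hradial : ∫ y in {y | ε < ‖y‖}, homogeneousKernel s Ω y * φ ‖y‖ ∂μ = 0 := by
    rw [← integral_indicator (measurableSet_lt measurable_const measurable_norm),
      ← integral_homogeneousKernel_mul_comp_norm_eq_zero μ s hΩ₀ ((Ioi ε).indicator φ)]
    simp [indicator]
  simp_rw [mul_sub]
  rw [integral_sub (integrableOn_homogeneousKernel_mul μ hds hsd hΩ hΩi hF hFB hε)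
    (integrableOn_homogeneousKernel_mul (H := fun y ↦ φ ‖y‖) μ hds hsd hΩ hΩi
      (hφ.comp measurable_norm) (fun y ↦ hφB ‖y‖) hε), hradial, sub_zero]

theorem tendsto_setIntegral_homogeneousKernel_mul (hds : (finrank ℝ E : ℝ) < s)
    (hsd : s < finrank ℝ E + 1) (hΩ : Measurable Ω)
    (hΩi : Integrable (fun θ : sphere (0 : E) 1 ↦ Ω θ) μ.toSphere)
    (hΩ₀ : ∫ θ : sphere (0 : E) 1, Ω θ ∂μ.toSphere = 0) {F : E → ℝ} (hF : Measurable F)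
    {φ : ℝ → ℝ} (hφ : Measurable φ) {A B : ℝ} (hFB : ∀ y, |F y| ≤ B) (hφB : ∀ r, |φ r| ≤ B)
    (hA : ∀ y, |F y - φ ‖y‖| ≤ A * ‖y‖) :
    Tendsto (fun ε : ℝ ↦ ∫ y in {y | ε < ‖y‖}, homogeneousKernel s Ω y * F y ∂μ) (𝓝[>] 0)
      (𝓝 (∫ y, homogeneousKernel s Ω y * (F y - φ ‖y‖) ∂μ)) := by
  have hint : Integrable (fun y ↦ homogeneousKernel s Ω y * (F y - φ ‖y‖)) μ :=
    integrable_homogeneousKernel_mul μ hds hsd hΩ hΩi (hF.sub (hφ.comp measurable_norm)) hA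
      fun y ↦ (abs_sub _ _).trans (add_le_add (hFB y) (hφB ‖y‖))
  refine (tendsto_setIntegral_lt_norm hint).congr' ?_
  filter_upwards [self_mem_nhdsWithin] with ε hε
  exact setIntegral_homogeneousKernel_mul_sub_comp_norm μ hds hsd hΩ hΩi hΩ₀ hF hφ hFB hφB hε

end PrincipalValue

/-! ### Averages along segments and real interpolation -/

section Interpolation

theorem setLIntegral_mul_rpow_lt_rpow_le {c b κ G : ℝ} (hc : 0 < c) (hb : 0 < b) (hκ : 0 < κ)
    (hG : 0 ≤ G) :
    ∫⁻ l in {l | κ * l ^ c < G}, ENNReal.ofReal (l ^ (c * b - 1)) ∂volume.restrict (Ioi 0) ≤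
      ENNReal.ofReal ((G / κ) ^ b / (c * b)) := by
  have hsubset : {l | κ * l ^ c < G} ∩ Ioi 0 ⊆ Ioc 0 ((G / κ) ^ c⁻¹) := by
    rintro l ⟨hl : κ * l ^ c < G, hl₀ : 0 < l⟩
    refine ⟨hl₀, (Real.le_rpow_inv_iff_of_pos hl₀.le (by positivity) hc).2 ?_⟩
    rw [le_div_iff₀' hκ]
    exact hl.le
  have hset : MeasurableSet {l : ℝ | κ * l ^ c < G} := measurableSet_lt (by fun_prop) (by fun_prop)
  have : 0 < c * b := by positivity
  rw [Measure.restrict_restrict hset]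
  refine (lintegral_mono_set hsubset).trans_eq ?_
  rw [lintegral_Ioc_zero_rpow (by linarith) (by positivity), sub_add_cancel,
    ← Real.rpow_mul (by positivity), inv_mul_cancel_left₀ hc.ne']

theorem le_ofReal_mul_of_forall_le {D : ℝ} (hD : 0 < D) {a N : ℝ≥0∞}
    (h : ∀ M : ℝ, 0 < M → N ≤ ENNReal.ofReal M → a ≤ ENNReal.ofReal (D * M)) :
    a ≤ ENNReal.ofReal D * N := by
  have hD' : ENNReal.ofReal D ≠ 0 := by simpa using hD
  refine (ENNReal.div_le_iff' hD' ENNReal.ofReal_ne_top).1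
    (le_of_forall_gt_imp_ge_of_dense fun M hNM ↦ ?_)
  rcases eq_or_ne M ⊤ with rfl | hM
  · exact le_top
  rw [ENNReal.div_le_iff' hD' ENNReal.ofReal_ne_top, ← ENNReal.ofReal_toReal hM,
    ← ENNReal.ofReal_mul hD.le]
  exact h _ (ENNReal.toReal_pos (pos_of_gt hNM).ne' hM) (hNM.le.trans (ENNReal.ofReal_toReal hM).ge)

variable {X : Type*} [MeasurableSpace X]

theorem lintegral_rpow_mul_measure_le {μ : Measure X} [SFinite μ] {h g : X → ℝ}
    (hg : Measurable g) {p c κ : ℝ} (hκ : 0 < κ)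
    (hlevel : ∀ l > 0, μ {x | l < h x} ≤ ENNReal.ofReal (κ * l ^ c)⁻¹ *
      ∫⁻ x in {x | κ * l ^ c < g x}, ENNReal.ofReal (g x) ∂μ) :
    ∫⁻ l in Ioi 0, μ {x | l < h x} * ENNReal.ofReal (l ^ (p * c - 1)) ≤
      ENNReal.ofReal κ⁻¹ * ∫⁻ x, ENNReal.ofReal (g x) * (∫⁻ l in {l | κ * l ^ c < g x},
        ENNReal.ofReal (l ^ (c * (p - 1) - 1)) ∂volume.restrict (Ioi 0)) ∂μ := by
  have hA : MeasurableSet {z : ℝ × X | κ * z.1 ^ c < g z.2} :=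
    measurableSet_lt (by fun_prop) (by fun_prop)
  have hpow (l : ℝ) (hl : 0 < l) : ENNReal.ofReal (κ * l ^ c)⁻¹ *
      ENNReal.ofReal (l ^ (p * c - 1)) =
        ENNReal.ofReal κ⁻¹ * ENNReal.ofReal (l ^ (c * (p - 1) - 1)) := by
    rw [← ENNReal.ofReal_mul (by positivity), ← ENNReal.ofReal_mul (by positivity), mul_inv,
      ← Real.rpow_neg hl.le, mul_assoc, ← Real.rpow_add hl]
    ring_nf
  calc
    _ ≤ ∫⁻ l in Ioi 0, ENNReal.ofReal κ⁻¹ * (ENNReal.ofReal (l ^ (c * (p - 1) - 1)) *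
          ∫⁻ x in {x | κ * l ^ c < g x}, ENNReal.ofReal (g x) ∂μ) := by
      refine setLIntegral_mono' measurableSet_Ioi fun l hl ↦ ?_
      grw [hlevel l hl, mul_right_comm, hpow l hl, mul_assoc]
    _ = _ := by
      rw [lintegral_const_mul' _ _ ENNReal.ofReal_ne_top]
      exact congrArg _ (lintegral_mul_setLIntegral_comm (volume.restrict (Ioi 0)) μ hA
        (w := fun l ↦ ENNReal.ofReal (l ^ (c * (p - 1) - 1))) (by fun_prop)
        (G := fun x ↦ ENNReal.ofReal (g x)) (by fun_prop))

theorem lintegral_rpow_le_of_measure_lt_le {μ : Measure X} [SFinite μ] {h g : X → ℝ}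
    (hh : Measurable h) (hg : Measurable g) (hh₀ : 0 ≤ h) (hg₀ : 0 ≤ g) {p c κ : ℝ} (hp : 1 < p)
    (hc : 0 < c) (hκ : 0 < κ)
    (hlevel : ∀ l > 0, μ {x | l < h x} ≤ ENNReal.ofReal (κ * l ^ c)⁻¹ *
      ∫⁻ x in {x | κ * l ^ c < g x}, ENNReal.ofReal (g x) ∂μ) :
    ∫⁻ x, ENNReal.ofReal (h x ^ (p * c)) ∂μ ≤
      ENNReal.ofReal (κ ^ (-p) * (p / (p - 1))) * ∫⁻ x, ENNReal.ofReal (g x ^ p) ∂μ := by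
  have hp₁ : 0 < p - 1 := sub_pos.2 hp
  have pointwise (x : X) : ENNReal.ofReal (g x) * ENNReal.ofReal ((g x / κ) ^ (p - 1) /
      (c * (p - 1))) = ENNReal.ofReal (κ ^ (1 - p) / (c * (p - 1))) * ENNReal.ofReal (g x ^ p) := by
    have : 0 ≤ g x := hg₀ x
    rw [← ENNReal.ofReal_mul this, ← ENNReal.ofReal_mul (by positivity),
      Real.div_rpow this hκ.le, show 1 - p = -(p - 1) by ring, Real.rpow_neg hκ.le]
    have hgp : g x ^ p = g x * g x ^ (p - 1) := by
      rw [← Real.rpow_one_add' this (by linarith)]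
      ring_nf
    rw [hgp]
    field_simp
  calc
    _ = ENNReal.ofReal (p * c) *
          ∫⁻ l in Ioi 0, μ {x | l < h x} * ENNReal.ofReal (l ^ (p * c - 1)) :=
      lintegral_rpow_eq_lintegral_meas_lt_mul μ (ae_of_all _ hh₀) hh.aemeasurable (by positivity)
    _ ≤ ENNReal.ofReal (p * c) * (ENNReal.ofReal κ⁻¹ * ∫⁻ x, ENNReal.ofReal (g x) *
          ENNReal.ofReal ((g x / κ) ^ (p - 1) / (c * (p - 1))) ∂μ) := by
      grw [lintegral_rpow_mul_measure_le hg hκ hlevel]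
      gcongr with x
      exact setLIntegral_mul_rpow_lt_rpow_le hc hp₁ hκ (hg₀ x)
    _ = _ := by
      simp_rw [pointwise]
      rw [lintegral_const_mul _ (by fun_prop), ← mul_assoc, ← mul_assoc,
        ← ENNReal.ofReal_mul (by positivity), ← ENNReal.ofReal_mul (by positivity)]
      congr 2
      rw [sub_eq_add_neg, Real.rpow_add hκ, Real.rpow_one]
      field_simp

end Interpolation

section SegmentAverage

variable {E : Type*} [NormedAddCommGroup E] [NormedSpace ℝ E] [MeasurableSpace E]

/-- The operator `g ↦ ∫ k(y) ∫₀¹ g(x - t y) dt dy` averaging `g` over the segments from `x` to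
`x - y` with weight `k`. It dominates the part of a singular integral near its singularity once
differences of `f` are written as integrals of `∇f`. -/
def segmentAverage (μ : Measure E) (k g : E → ℝ≥0∞) (x : E) : ℝ≥0∞ :=
  ∫⁻ y, k y * (∫⁻ t in Ioo (0 : ℝ) 1, g (x - t • y)) ∂μ

theorem segmentAverage_le_add_mul (μ : Measure E) {k g u : E → ℝ≥0∞} (hk : Measurable k)
    {m : ℝ≥0∞} (hgu : ∀ x, g x ≤ u x + m) (x : E) :
    segmentAverage μ k g x ≤ segmentAverage μ k u x + (∫⁻ y, k y ∂μ) * m := by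
  rw [segmentAverage, segmentAverage, ← lintegral_mul_const _ hk,
    ← lintegral_add_right _ (hk.mul_const m)]
  refine lintegral_mono fun y ↦ ?_
  rw [← mul_add]
  gcongr
  calc
    _ ≤ ∫⁻ t in Ioo (0 : ℝ) 1, (u (x - t • y) + m) := lintegral_mono fun t ↦ hgu _
    _ = _ := by simp [lintegral_add_right _ measurable_const]

theorem ofReal_le_segmentAverage_indicator (μ : Measure E) {k : E → ℝ≥0∞} (hk : Measurable k)
    {A : ℝ} (hA : 0 < A) (hkA : ∫⁻ y, k y ∂μ ≤ ENNReal.ofReal A) {g : E → ℝ} {l : ℝ} (hl : 0 < l)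
    {x : E} (hle : ENNReal.ofReal l ≤
      segmentAverage μ k (fun y ↦ ENNReal.ofReal (g y)) x + ENNReal.ofReal (l / 2)) :
    ENNReal.ofReal (l / 4) ≤ segmentAverage μ k
      (indicator {x | l / (4 * A) < g x} fun x ↦ ENNReal.ofReal (g x)) x := by
  set m := l / (4 * A) with hm
  set u : E → ℝ≥0∞ := indicator {x | m < g x} fun x ↦ ENNReal.ofReal (g x) with hu
  have g_le_add (x : E) : ENNReal.ofReal (g x) ≤ u x + ENNReal.ofReal m := by
    by_cases hx : m < g x
    · simp [hu, hx]
    · exact (ENNReal.ofReal_le_ofReal (not_lt.1 hx)).trans le_add_self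
  have hsum : ENNReal.ofReal (l / 4) + ENNReal.ofReal (3 * l / 4) ≤
      segmentAverage μ k u x + ENNReal.ofReal (3 * l / 4) := by
    calc
      _ = ENNReal.ofReal l := by
        rw [← ENNReal.ofReal_add (by positivity) (by positivity)]
        ring_nf
      _ ≤ segmentAverage μ k u x + ENNReal.ofReal A * ENNReal.ofReal m +
          ENNReal.ofReal (l / 2) := by
        grw [hle, segmentAverage_le_add_mul μ hk g_le_add x, hkA]
      _ = _ := by
        rw [add_assoc, ← ENNReal.ofReal_mul hA.le, ← ENNReal.ofReal_add (by positivity)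
          (by positivity), hm]
        congr 2
        field_simp
        ring
  exact (ENNReal.add_le_add_iff_right ENNReal.ofReal_ne_top).1 hsum

variable [BorelSpace E] [SecondCountableTopology E] (μ : Measure E) [SFinite μ]

theorem measurable_mul_segment {k g : E → ℝ≥0∞} (hk : Measurable k) (hg : Measurable g) :
    Measurable fun z : E × E ↦ k z.2 * ∫⁻ t in Ioo (0 : ℝ) 1, g (z.1 - t • z.2) := by
  have : Measurable fun z : (E × E) × ℝ ↦ g (z.1.1 - z.2 • z.1.2) := hg.comp (by fun_prop)
  exact (hk.comp measurable_snd).mul this.lintegral_prod_right'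

theorem measurable_segmentAverage {k g : E → ℝ≥0∞} (hk : Measurable k) (hg : Measurable g) :
    Measurable (segmentAverage μ k g) :=
  (measurable_mul_segment hk hg).lintegral_prod_right'

variable [μ.IsAddRightInvariant]

theorem lintegral_segmentAverage {k g : E → ℝ≥0∞} (hk : Measurable k) (hg : Measurable g) :
    ∫⁻ x, segmentAverage μ k g x ∂μ = (∫⁻ y, k y ∂μ) * ∫⁻ x, g x ∂μ := by
  simp only [segmentAverage]
  rw [lintegral_lintegral_swap (measurable_mul_segment hk hg).aemeasurable,
    ← lintegral_mul_const _ hk]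
  refine lintegral_congr fun y ↦ ?_
  have hgy : Measurable fun z : E × ℝ ↦ g (z.1 - z.2 • y) := hg.comp (by fun_prop)
  rw [lintegral_const_mul _ hgy.lintegral_prod_right', lintegral_lintegral_swap hgy.aemeasurable]
  simp [lintegral_sub_right_eq_self g]

theorem measure_lt_le_of_le_segmentAverage_add {k : E → ℝ≥0∞} (hk : Measurable k) {A : ℝ}
    (hA : 0 < A) (hkA : ∫⁻ y, k y ∂μ ≤ ENNReal.ofReal A) {g h : E → ℝ} (hg : Measurable g) {l : ℝ}
    (hl : 0 < l) (hle : ∀ x, ENNReal.ofReal (h x) ≤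
      segmentAverage μ k (fun y ↦ ENNReal.ofReal (g y)) x + ENNReal.ofReal (l / 2)) :
    μ {x | l < h x} ≤ ENNReal.ofReal (l / (4 * A))⁻¹ *
      ∫⁻ x in {x | l / (4 * A) < g x}, ENNReal.ofReal (g x) ∂μ := by
  set u : E → ℝ≥0∞ := indicator {x | l / (4 * A) < g x} fun x ↦ ENNReal.ofReal (g x) with hu
  have hset : MeasurableSet {x | l / (4 * A) < g x} := measurableSet_lt measurable_const hg
  have hum : Measurable u := hg.ennreal_ofReal.indicator hset
  have hsubset : {x | l < h x} ⊆ {x | ENNReal.ofReal (l / 4) ≤ segmentAverage μ k u x} :=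
    fun x hx ↦ ofReal_le_segmentAverage_indicator μ hk hA hkA hl
      ((ENNReal.ofReal_le_ofReal (le_of_lt hx)).trans (hle x))
  calc
    _ ≤ (∫⁻ x, segmentAverage μ k u x ∂μ) / ENNReal.ofReal (l / 4) :=
      (measure_mono hsubset).trans (meas_ge_le_lintegral_div
        (measurable_segmentAverage μ hk hum).aemeasurable (by simpa using hl) (by simp))
    _ ≤ ENNReal.ofReal A * (∫⁻ x, u x ∂μ) / ENNReal.ofReal (l / 4) := by
      grw [lintegral_segmentAverage μ hk hum, hkA]
    _ = _ := by
      rw [hu, lintegral_indicator hset, ENNReal.mul_div_right_comm,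
        ← ENNReal.ofReal_div_of_pos (by positivity)]
      congr 2
      field_simp

theorem lintegral_rpow_le_of_le_segmentAverage_add {p a b α δ : ℝ} (hp : 1 < p) (ha : 0 < a)
    (hb : 0 < b) (hα : 0 < α) (hδ : 0 < δ) {k : ℝ → E → ℝ≥0∞} (hk : ∀ R, Measurable (k R))
    (hkR : ∀ R > 0, ∫⁻ y, k R y ∂μ ≤ ENNReal.ofReal (a * R ^ α)) {g h : E → ℝ} (hg : Measurable g)
    (hh : Measurable h) (hg₀ : 0 ≤ g) (hh₀ : 0 ≤ h)
    (hle : ∀ R > 0, ∀ x, ENNReal.ofReal (h x) ≤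
      segmentAverage μ (k R) (fun y ↦ ENNReal.ofReal (g y)) x + ENNReal.ofReal (b * R ^ (-δ))) :
    ∫⁻ x, ENNReal.ofReal (h x ^ (p * (1 + α / δ))) ∂μ ≤
      ENNReal.ofReal ((4 * a) ^ p * (2 * b) ^ (p * (α / δ)) * (p / (p - 1))) *
        ∫⁻ x, ENNReal.ofReal (g x ^ p) ∂μ := by
  set κ : ℝ := ((2 * b) ^ (α / δ))⁻¹ / (4 * a) with hκ
  have hκp : κ ^ (-p) = (4 * a) ^ p * (2 * b) ^ (p * (α / δ)) := by
    rw [hκ, Real.rpow_neg (by positivity), ← Real.inv_rpow (by positivity), inv_div, div_inv_eq_mul,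
      Real.mul_rpow (by positivity) (by positivity), ← Real.rpow_mul (by positivity), mul_comm p]
  rw [← hκp]
  refine lintegral_rpow_le_of_measure_lt_le hh hg hh₀ hg₀ hp (by positivity) (by positivity)
    fun l hl ↦ ?_
  set R : ℝ := (l / (2 * b)) ^ (-δ⁻¹) with hR
  have hRδ : b * R ^ (-δ) = l / 2 := by
    rw [hR, ← Real.rpow_mul (by positivity), neg_mul_neg, inv_mul_cancel₀ hδ.ne', Real.rpow_one]
    field_simp
  have hRα : κ * l ^ (1 + α / δ) = l / (4 * (a * R ^ α)) := by
    rw [hR, ← Real.rpow_mul (by positivity), hκ, Real.rpow_add hl, Real.rpow_one, neg_mul,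
      inv_mul_eq_div, Real.rpow_neg (by positivity), Real.div_rpow hl.le (by positivity)]
    field_simp
  rw [hRα]
  exact measure_lt_le_of_le_segmentAverage_add μ (hk R) (by positivity) (hkR R (by positivity)) hg
    hl fun x ↦ hRδ ▸ hle R (by positivity) x

theorem rpow_lintegral_rpow_le_of_le_segmentAverage_add {p a b α δ : ℝ} (hp : 1 < p) (ha : 0 < a)
    (hb : 0 < b) (hα : 0 < α) (hδ : 0 < δ) {k : ℝ → E → ℝ≥0∞} (hk : ∀ R, Measurable (k R))
    (hkR : ∀ R > 0, ∫⁻ y, k R y ∂μ ≤ ENNReal.ofReal (a * R ^ α)) {g h : E → ℝ} (hg : Measurable g)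
    (hh : Measurable h) (hg₀ : 0 ≤ g) (hh₀ : 0 ≤ h)
    (hle : ∀ R > 0, ∀ x, ENNReal.ofReal (h x) ≤
      segmentAverage μ (k R) (fun y ↦ ENNReal.ofReal (g y)) x +
        ENNReal.ofReal (b * R ^ (-δ)) * (∫⁻ y, ENNReal.ofReal (g y) ^ p ∂μ) ^ (1 / p)) :
    (∫⁻ x, ENNReal.ofReal (h x) ^ (p * (1 + α / δ)) ∂μ) ^ (1 / (p * (1 + α / δ))) ≤
      ENNReal.ofReal (((4 * a) ^ p * (2 * b) ^ (p * (α / δ)) * (p / (p - 1))) ^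
        (1 / (p * (1 + α / δ)))) * (∫⁻ y, ENNReal.ofReal (g y) ^ p ∂μ) ^ (1 / p) := by
  have : 0 < p - 1 := sub_pos.2 hp
  set q := p * (1 + α / δ) with hq
  have hq₀ : 0 < q := by positivity
  set D := (4 * a) ^ p * (2 * b) ^ (p * (α / δ)) * (p / (p - 1)) with hD
  have hD₀ : 0 < D := by positivity
  refine le_ofReal_mul_of_forall_le (by positivity) fun M hM hNM ↦ ?_
  have hgM : ∫⁻ y, ENNReal.ofReal (g y ^ p) ∂μ ≤ ENNReal.ofReal (M ^ p) := by
    rw [one_div, ENNReal.rpow_inv_le_iff (by positivity), ENNReal.ofReal_rpow_of_pos hM] at hNM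
    simpa only [ENNReal.ofReal_rpow_of_nonneg (hg₀ _) (by positivity : 0 ≤ p)] using hNM
  have hleM (R : ℝ) (hR : 0 < R) (x : E) : ENNReal.ofReal (h x) ≤
      segmentAverage μ (k R) (fun y ↦ ENNReal.ofReal (g y)) x +
        ENNReal.ofReal (b * M * R ^ (-δ)) := by
    grw [hle R hR x, hNM, ← ENNReal.ofReal_mul (by positivity), mul_right_comm]
  have hconst : (4 * a) ^ p * (2 * (b * M)) ^ (p * (α / δ)) * (p / (p - 1)) * M ^ p =
      (D ^ q⁻¹ * M) ^ q := by
    rw [Real.mul_rpow (by positivity) hM.le, ← Real.rpow_mul hD₀.le, inv_mul_cancel₀ hq₀.ne',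
      Real.rpow_one, ← mul_assoc 2, Real.mul_rpow (by positivity) hM.le, hD, hq, mul_one_add,
      Real.rpow_add hM]
    ring
  rw [one_div, ENNReal.rpow_inv_le_iff hq₀, ENNReal.ofReal_rpow_of_nonneg (by positivity) hq₀.le]
  simp only [ENNReal.ofReal_rpow_of_nonneg (hh₀ _) hq₀.le]
  grw [lintegral_rpow_le_of_le_segmentAverage_add μ hp ha (by positivity) hα hδ hk hkR hg hh hg₀
    hh₀ hleM, hgM, ← ENNReal.ofReal_mul (by positivity), hconst]

end SegmentAverage

/-! ### Singular integrals with homogeneous kernels -/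

section SingularIntegral

open Module

variable {E : Type*} [NormedAddCommGroup E] [NormedSpace ℝ E] [MeasurableSpace E]

/-- The principal value `p.v. ∫ Ω(y/|y|) |y|^{-s} f(x - y) dy`. -/
def homogeneousSingularIntegral (μ : Measure E) (s : ℝ) (Ω f : E → ℝ) (x : E) : ℝ :=
  limUnder (𝓝[>] 0) fun ε : ℝ ↦
    ∫ y in {y | ε < ‖y‖}, homogeneousKernel s Ω y * f (x - y) ∂μ

/-- The weight `|Ω(y/|y|)| |y|^{1-s}` on the ball `|y| ≤ R`, which acts on `|∇f|` in the part of
the singular integral near the origin. -/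
def nearKernel (s : ℝ) (Ω : E → ℝ) (R : ℝ) : E → ℝ≥0∞ :=
  (closedBall 0 R).indicator fun y ↦ ‖homogeneousKernel s Ω y‖ₑ * ‖y‖ₑ

variable [BorelSpace E] {s : ℝ} {Ω : E → ℝ}

theorem measurable_nearKernel (s : ℝ) (hΩ : Measurable Ω) (R : ℝ) :
    Measurable (nearKernel s Ω R) :=
  ((measurable_homogeneousKernel s hΩ).enorm.mul measurable_enorm).indicator
    measurableSet_closedBall

theorem setLIntegral_enorm_homogeneousKernel_mul_sub_le (μ : Measure E) (s : ℝ) (Ω : E → ℝ)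
    {f : E → ℝ} (hf : ContDiff ℝ 1 f) (x : E) (R : ℝ) :
    ∫⁻ y in closedBall 0 R, ‖homogeneousKernel s Ω y * (f (x - y) - f x)‖ₑ ∂μ ≤
      segmentAverage μ (nearKernel s Ω R) (fun y ↦ ‖fderiv ℝ f y‖ₑ) x := by
  rw [← lintegral_indicator measurableSet_closedBall, segmentAverage]
  refine lintegral_mono fun y ↦ ?_
  by_cases hy : y ∈ closedBall (0 : E) R
  · have hsegment := enorm_sub_le_lintegral_enorm_fderiv hf x (x - y)
    simp only [sub_sub_cancel_left, enorm_neg, smul_neg, ← sub_eq_add_neg] at hsegment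
    simp only [nearKernel, indicator_of_mem hy, enorm_mul, mul_assoc]
    gcongr
  · simp [nearKernel, indicator_of_notMem hy]

variable [FiniteDimensional ℝ E] [Nontrivial E] (μ : Measure E) [μ.IsAddHaarMeasure]

theorem lintegral_nearKernel_le (hsd : s < finrank ℝ E + 1) (hΩ : Measurable Ω) {R : ℝ}
    (hR : 0 < R) :
    ∫⁻ y, nearKernel s Ω R y ∂μ ≤ (∫⁻ θ : sphere (0 : E) 1, ‖Ω θ‖ₑ ∂μ.toSphere) *
      ENNReal.ofReal (R ^ (finrank ℝ E + 1 - s) / (finrank ℝ E + 1 - s)) := by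
  simp only [nearKernel, indicator_mul_right]
  refine lintegral_enorm_homogeneousKernel_mul_le μ s hΩ
    (measurable_enorm.indicator measurableSet_closedBall) fun θ hθ ↦ ?_
  have hnorm (r : ℝ) : ‖r • θ‖ = |r| := by
    rw [norm_smul, norm_eq_of_mem_sphere ⟨θ, hθ⟩, mul_one, Real.norm_eq_abs]
  rw [show (finrank ℝ E : ℝ) + 1 - s = finrank ℝ E - s + 1 by ring,
    ← lintegral_Ioc_zero_rpow (by linarith) hR.le, ← lintegral_indicator measurableSet_Ioc,
    ← lintegral_indicator measurableSet_Ioi]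
  refine lintegral_mono fun r ↦ ?_
  by_cases hr : r ∈ Ioc 0 R
  · have hmem : r • θ ∈ closedBall (0 : E) R := by simp [hnorm, abs_of_pos hr.1, hr.2]
    rw [indicator_of_mem hr, indicator_of_mem (mem_Ioi.2 hr.1), indicator_of_mem hmem,
      ← ofReal_norm, hnorm, abs_of_pos hr.1, ← ENNReal.ofReal_mul (Real.rpow_nonneg hr.1.le _),
      ← Real.rpow_add_one hr.1.ne']
    ring_nf
    rfl
  · by_cases hr₀ : 0 < r
    · have : ¬r ≤ R := fun h ↦ hr ⟨hr₀, h⟩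
      simp [indicator, hr₀, hnorm, abs_of_pos hr₀, this]
    · simp [indicator, hr₀]

theorem homogeneousSingularIntegral_eq_integral (hds : (finrank ℝ E : ℝ) < s)
    (hsd : s < finrank ℝ E + 1) (hΩ : Measurable Ω)
    (hΩi : Integrable (fun θ : sphere (0 : E) 1 ↦ Ω θ) μ.toSphere)
    (hΩ₀ : ∫ θ : sphere (0 : E) 1, Ω θ ∂μ.toSphere = 0) {f : E → ℝ} {B : ℝ} {L : ℝ≥0}
    (hB : ∀ x, |f x| ≤ B) (hL : LipschitzWith L f) (x : E) {φ : ℝ → ℝ} (hφ : Measurable φ)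
    (hφB : ∀ r, |φ r| ≤ B) {R : ℝ} (hR : 0 < R) (hφR : ∀ r ≤ R, φ r = f x) :
    homogeneousSingularIntegral μ s Ω f x =
      ∫ y, homogeneousKernel s Ω y * (f (x - y) - φ ‖y‖) ∂μ := by
  have hf : Measurable f := hL.continuous.measurable
  have hB₀ : 0 ≤ B := (abs_nonneg _).trans (hB x)
  have hdiff (y : E) : |f (x - y) - φ ‖y‖| ≤ (L + 2 * B / R) * ‖y‖ := by
    rw [add_mul]
    rcases le_or_gt ‖y‖ R with hy | hy
    · have : |f (x - y) - f x| ≤ L * ‖y‖ := by simpa using hL.norm_sub_le (x - y) x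
      have : 0 ≤ 2 * B / R * ‖y‖ := by positivity
      rw [hφR _ hy]
      linarith
    · have : 2 * B ≤ 2 * B / R * ‖y‖ := by
        rw [div_mul_eq_mul_div, le_div_iff₀ hR]
        gcongr
      have : 0 ≤ L * ‖y‖ := by positivity
      linarith [abs_sub (f (x - y)) (φ ‖y‖), hB (x - y), hφB ‖y‖]
  exact (tendsto_setIntegral_homogeneousKernel_mul μ hds hsd hΩ hΩi hΩ₀ (hf.comp (by fun_prop)) hφ
    (fun y ↦ hB (x - y)) hφB hdiff).limUnder_eq

theorem measurable_homogeneousSingularIntegral (hds : (finrank ℝ E : ℝ) < s)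
    (hsd : s < finrank ℝ E + 1) (hΩ : Measurable Ω)
    (hΩi : Integrable (fun θ : sphere (0 : E) 1 ↦ Ω θ) μ.toSphere)
    (hΩ₀ : ∫ θ : sphere (0 : E) 1, Ω θ ∂μ.toSphere = 0) {f : E → ℝ} {B : ℝ} {L : ℝ≥0}
    (hB : ∀ x, |f x| ≤ B) (hL : LipschitzWith L f) :
    Measurable (homogeneousSingularIntegral μ s Ω f) := by
  have hf : Measurable f := hL.continuous.measurable
  have hK : Measurable (homogeneousKernel s Ω) := measurable_homogeneousKernel s hΩ
  have hrepr : homogeneousSingularIntegral μ s Ω f = fun x ↦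
      ∫ y, homogeneousKernel s Ω y * (f (x - y) - (Iic 1).indicator (fun _ ↦ f x) ‖y‖) ∂μ := by
    ext x
    refine homogeneousSingularIntegral_eq_integral μ hds hsd hΩ hΩi hΩ₀ hB hL x
      (measurable_const.indicator measurableSet_Iic) (fun r ↦ ?_) one_pos fun r hr ↦ by simp [hr]
    exact (norm_indicator_le_norm_self (fun _ ↦ f x) r).trans (hB x)
  have hcutoff : Measurable fun z : E × E ↦ (Iic 1).indicator (fun _ ↦ f z.1) ‖z.2‖ :=
    (hf.comp measurable_fst).indicator
      (measurableSet_le (measurable_norm.comp measurable_snd) measurable_const)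
  rw [hrepr]
  have : Measurable fun z : E × E ↦ homogeneousKernel s Ω z.2 *
      (f (z.1 - z.2) - (Iic 1).indicator (fun _ ↦ f z.1) ‖z.2‖) := by fun_prop
  exact this.stronglyMeasurable.integral_prod_right.measurable

theorem exists_setLIntegral_enorm_homogeneousKernel_mul_sub_scaledBallAverage_le {p α : ℝ}
    (hp : 1 ≤ p) (hdp : (finrank ℝ E : ℝ) - 1 < p) (hα : α < finrank ℝ E / p) (hΩ : Measurable Ω)
    (hΩi : Integrable (fun θ : sphere (0 : E) 1 ↦ Ω θ) μ.toSphere) :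
    ∃ C : ℝ≥0∞, C ≠ ⊤ ∧ ∀ R > 0, ∀ f : E → ℝ, ContDiff ℝ 1 f → ∀ B, (∀ x, |f x| ≤ B) → ∀ x,
      ∫⁻ y in (closedBall 0 R)ᶜ, ‖homogeneousKernel (finrank ℝ E + 1 - α) Ω y *
          (f (x - y) - scaledBallAverage μ f x ‖y‖)‖ₑ ∂μ ≤
        C * ENNReal.ofReal (R ^ (-(finrank ℝ E / p - α))) *
          (∫⁻ y, ‖fderiv ℝ f y‖ₑ ^ p ∂μ) ^ (1 / p) := by
  obtain ⟨C, hC, tail_le⟩ := exists_lintegral_Ioi_rpow_mul_enorm_sub_scaledBallAverage_le μ hp hdp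
    (sub_pos.2 hα)
  refine ⟨_, ENNReal.mul_ne_top hΩi.2.ne hC, fun R hR f hf B hB x ↦ ?_⟩
  have hmeas : Measurable fun y ↦ f (x - y) - scaledBallAverage μ f x ‖y‖ :=
    (hf.continuous.measurable.comp (by fun_prop)).sub
      ((measurable_scaledBallAverage μ hf.continuous x).comp measurable_norm)
  have hset : MeasurableSet (closedBall (0 : E) R)ᶜ := measurableSet_closedBall.compl
  simp_rw [← lintegral_indicator hset, enorm_mul, indicator_mul_right, mul_assoc]
  refine lintegral_enorm_homogeneousKernel_mul_le μ _ hΩ (hmeas.enorm.indicator hset)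
    fun θ hθ ↦ ?_
  rw [← mul_assoc]
  have hθ' : ‖θ‖ = 1 := norm_eq_of_mem_sphere ⟨θ, hθ⟩
  refine le_trans ?_ (tail_le θ hθ' R hR f hf B hB x)
  rw [← lintegral_indicator measurableSet_Ioi, ← lintegral_indicator measurableSet_Ioi]
  refine lintegral_mono fun r ↦ ?_
  by_cases hr : 0 < r
  · have hnorm : ‖r • θ‖ = r := by rw [norm_smul, hθ', mul_one, Real.norm_of_nonneg hr.le]
    by_cases hRr : R < r
    · rw [indicator_of_mem (mem_Ioi.2 hr), indicator_of_mem (mem_Ioi.2 hRr),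
        indicator_of_mem (by simpa [hnorm] using hRr), hnorm]
      ring_nf
      rfl
    · simp [indicator, hr, hRr, hnorm]
  · simp [indicator, hr]

theorem exists_enorm_homogeneousSingularIntegral_le {p α : ℝ} (hp : 1 ≤ p)
    (hdp : (finrank ℝ E : ℝ) - 1 < p) (hα₀ : 0 < α) (hα₁ : α < 1) (hα : α < finrank ℝ E / p)
    (hΩ : Measurable Ω) (hΩi : Integrable (fun θ : sphere (0 : E) 1 ↦ Ω θ) μ.toSphere)
    (hΩ₀ : ∫ θ : sphere (0 : E) 1, Ω θ ∂μ.toSphere = 0) :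
    ∃ C : ℝ≥0∞, C ≠ ⊤ ∧ ∀ R > 0, ∀ f : E → ℝ, ContDiff ℝ 1 f → ∀ B, (∀ x, |f x| ≤ B) →
      ∀ L, LipschitzWith L f → ∀ x,
        ‖homogeneousSingularIntegral μ (finrank ℝ E + 1 - α) Ω f x‖ₑ ≤
          segmentAverage μ (nearKernel (finrank ℝ E + 1 - α) Ω R) (fun y ↦ ‖fderiv ℝ f y‖ₑ) x +
            C * ENNReal.ofReal (R ^ (-(finrank ℝ E / p - α))) *
              (∫⁻ y, ‖fderiv ℝ f y‖ₑ ^ p ∂μ) ^ (1 / p) := by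
  obtain ⟨C, hC, far_le⟩ := exists_setLIntegral_enorm_homogeneousKernel_mul_sub_scaledBallAverage_le
    μ hp hdp hα hΩ hΩi
  refine ⟨C, hC, fun R hR f hf B hB L hL x ↦ ?_⟩
  set φ : ℝ → ℝ := fun r ↦ if r ≤ R then f x else scaledBallAverage μ f x r with hφ
  have hφm : Measurable φ := Measurable.ite measurableSet_Iic measurable_const
    (measurable_scaledBallAverage μ hf.continuous x)
  have hφB (r : ℝ) : |φ r| ≤ B := by
    simp only [hφ]
    split_ifs
    exacts [hB x, abs_scaledBallAverage_le μ hB x r]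
  rw [homogeneousSingularIntegral_eq_integral μ (by linarith) (by linarith) hΩ hΩi hΩ₀ hB hL x hφm
    hφB hR fun r hr ↦ if_pos hr]
  refine (enorm_integral_le_lintegral_enorm _).trans ?_
  rw [← lintegral_add_compl _ (measurableSet_closedBall (x := (0 : E)) (ε := R))]
  refine add_le_add (le_trans (le_of_eq ?_)
    (setLIntegral_enorm_homogeneousKernel_mul_sub_le μ _ Ω hf x R))
    (le_trans (le_of_eq ?_) (far_le R hR f hf B hB x))
  · refine setLIntegral_congr_fun measurableSet_closedBall fun y hy ↦ ?_
    simp [hφ, mem_closedBall_zero_iff.1 hy]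
  · refine setLIntegral_congr_fun measurableSet_closedBall.compl fun y hy ↦ ?_
    have : ¬‖y‖ ≤ R := by simpa using hy
    simp [hφ, this]

theorem eq_mul_one_add_div_of_one_div_eq_sub {d p q α : ℝ} (hd : d ≠ 0) (hp : p ≠ 0)
    (hα : d / p - α ≠ 0) (hpq : 1 / q = 1 / p - α / d) : q = p * (1 + α / (d / p - α)) := by
  have hq : q = d / (d / p - α) := by
    rw [← one_div_one_div q, hpq, one_div (_ - _), ← inv_div]
    field_simp
  rw [hq, one_add_div hα, sub_add_cancel]
  field_simp

theorem lintegral_nearKernel_le_ofReal {α : ℝ} (hα : 0 < α) (hΩ : Measurable Ω)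
    (hΩi : Integrable (fun θ : sphere (0 : E) 1 ↦ Ω θ) μ.toSphere) {R : ℝ} (hR : 0 < R) :
    ∫⁻ y, nearKernel (finrank ℝ E + 1 - α) Ω R y ∂μ ≤
      ENNReal.ofReal (((∫⁻ θ : sphere (0 : E) 1, ‖Ω θ‖ₑ ∂μ.toSphere).toReal / α + 1) * R ^ α) := by
  have hmass := lintegral_nearKernel_le μ (s := finrank ℝ E + 1 - α) (by linarith) hΩ hR
  rw [sub_sub_cancel, ← ENNReal.ofReal_toReal hΩi.2.ne,
    ← ENNReal.ofReal_mul ENNReal.toReal_nonneg, mul_div_assoc', ← div_mul_eq_mul_div] at hmass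
  refine hmass.trans (ENNReal.ofReal_le_ofReal ?_)
  gcongr
  exact le_add_of_nonneg_right zero_le_one

theorem exists_rpow_lintegral_enorm_homogeneousSingularIntegral_le {p q α : ℝ} (hp : 1 < p)
    (hdp : (finrank ℝ E : ℝ) - 1 < p) (hα₀ : 0 < α) (hα₁ : α < 1) (hα : α < finrank ℝ E / p)
    (hpq : 1 / q = 1 / p - α / finrank ℝ E) (hΩ : Measurable Ω)
    (hΩi : Integrable (fun θ : sphere (0 : E) 1 ↦ Ω θ) μ.toSphere)
    (hΩ₀ : ∫ θ : sphere (0 : E) 1, Ω θ ∂μ.toSphere = 0) :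
    ∃ C > (0 : ℝ), ∀ f : E → ℝ, ContDiff ℝ 1 f → HasCompactSupport f →
      (∫⁻ x, ‖homogeneousSingularIntegral μ (finrank ℝ E + 1 - α) Ω f x‖ₑ ^ q ∂μ) ^ (1 / q) ≤
        ENNReal.ofReal C * (∫⁻ y, ‖fderiv ℝ f y‖ₑ ^ p ∂μ) ^ (1 / p) := by
  set δ := (finrank ℝ E : ℝ) / p - α
  have hδ : 0 < δ := sub_pos.2 hα
  have hq : q = p * (1 + α / δ) := eq_mul_one_add_div_of_one_div_eq_sub
    (mod_cast finrank_pos.ne') (by positivity) hδ.ne' hpq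
  obtain ⟨C₀, hC₀, pointwise_le⟩ :=
    exists_enorm_homogeneousSingularIntegral_le μ hp.le hdp hα₀ hα₁ hα hΩ hΩi hΩ₀
  set a := (∫⁻ θ : sphere (0 : E) 1, ‖Ω θ‖ₑ ∂μ.toSphere).toReal / α + 1
  have ha₀ : 0 < a := by positivity
  have hC₀_le : C₀ ≤ ENNReal.ofReal (C₀.toReal + 1) := by
    grw [← le_add_of_nonneg_right zero_le_one, ENNReal.ofReal_toReal hC₀]
  have : 0 < p - 1 := sub_pos.2 hp
  refine ⟨((4 * a) ^ p * (2 * (C₀.toReal + 1)) ^ (p * (α / δ)) * (p / (p - 1))) ^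
    (1 / (p * (1 + α / δ))), by positivity, fun f hf hsupp ↦ ?_⟩
  obtain ⟨B, hB⟩ := hsupp.exists_bound_of_continuous hf.continuous
  obtain ⟨L, hL⟩ := hf.lipschitzWith_of_hasCompactSupport hsupp one_ne_zero
  have hT : Measurable (homogeneousSingularIntegral μ (finrank ℝ E + 1 - α) Ω f) :=
    measurable_homogeneousSingularIntegral μ (by linarith) (by linarith) hΩ hΩi hΩ₀ hB hL
  have hDf : Continuous (fderiv ℝ f) := hf.continuous_fderiv one_ne_zero
  simp only [← ofReal_norm] at pointwise_le ⊢
  rw [hq]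
  exact rpow_lintegral_rpow_le_of_le_segmentAverage_add μ hp ha₀ (by positivity) hα₀ hδ
    (measurable_nearKernel _ hΩ) (fun R hR ↦ lintegral_nearKernel_le_ofReal μ hα₀ hΩ hΩi hR)
    hDf.norm.measurable hT.norm (fun _ ↦ norm_nonneg _) (fun _ ↦ norm_nonneg _) fun R hR x ↦ by
      grw [pointwise_le R hR f hf B hB L hL x, hC₀_le, ← ENNReal.ofReal_mul (by positivity)]

end SingularIntegral

/-! ### Rough fractional singular integrals on Euclidean space -/

section Euclidean

variable {n : ℕ}

theorem roughOp_eq_homogeneousSingularIntegral (α : ℝ) (Ω f : Rn n → ℝ) :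
    roughOp n α Ω f = homogeneousSingularIntegral volume (n + 1 - α) Ω f :=
  rfl

theorem gradNorm_eq_norm_fderiv (f : Rn n → ℝ) (x : Rn n) : gradNorm f x = ‖fderiv ℝ f x‖ := by
  simp [gradNorm, gradient]

theorem weakNorm_le_lqNorm {p : ℝ} (hp : 0 < p) {g : Rn n → ℝ≥0∞} (hg : Measurable g) :
    weakNorm n p g ≤ lqNorm n p g := by
  refine iSup₂_le fun l _ ↦ ?_
  rw [lqNorm, one_div, ENNReal.le_rpow_inv_iff hp, ENNReal.mul_rpow_of_nonneg _ _ hp.le,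
    ENNReal.rpow_inv_rpow hp.ne']
  grw [← mul_meas_ge_le_lintegral (hg.pow_const p) (ENNReal.ofReal l ^ p)]
  gcongr
  exact fun hx ↦ ENNReal.rpow_le_rpow hx.le hp.le

theorem statement7_general {α : ℝ} (hα₀ : 0 < α) (hα₁ : α < 1) {Ω : Rn n → ℝ} (hΩ : Measurable Ω)
    (hΩi : Integrable Ω (sphereMeasure n)) (hΩ₀ : ∫ y, Ω y ∂sphereMeasure n = 0) {p q : ℝ}
    (hp : 1 < p) (hnp : (n : ℝ) - 1 < p) (hpα : p < n / α) (hpq : 1 / q = 1 / p - α / n) :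
    ∃ C > (0 : ℝ), ∀ f : Rn n → ℝ, ContDiff ℝ 1 f → HasCompactSupport f →
      Measurable (roughOp n α Ω f) ∧
        lqNorm n q (fun x ↦ ENNReal.ofReal |roughOp n α Ω f x|) ≤
          ENNReal.ofReal C * lqNorm n p (fun x ↦ ENNReal.ofReal (gradNorm f x)) := by
  have hn : n ≠ 0 := by
    rintro rfl
    norm_num at hpα
    linarith
  have : Nonempty (Fin n) := Fin.pos_iff_nonempty.1 (Nat.pos_of_ne_zero hn)
  have hd : Module.finrank ℝ (Rn n) = n := finrank_euclideanSpace_fin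
  have hΩi' := integrable_toSphere_of_integrable_sphereMeasure hn hΩi
  have hΩ₀' := integral_toSphere_eq_zero_of_integral_sphereMeasure_eq_zero hn hΩ₀
  have hα : α < n / p := (lt_div_comm₀ (by positivity) hα₀).1 hpα
  obtain ⟨C, hC, strong_type⟩ := exists_rpow_lintegral_enorm_homogeneousSingularIntegral_le
    (volume : Measure (Rn n)) hp (by rwa [hd]) hα₀ hα₁ (by rwa [hd]) (by rwa [hd]) hΩ hΩi' hΩ₀'
  refine ⟨C, hC, fun f hf hsupp ↦ ⟨?_, ?_⟩⟩
  · obtain ⟨B, hB⟩ := hsupp.exists_bound_of_continuous hf.continuous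
    obtain ⟨L, hL⟩ := hf.lipschitzWith_of_hasCompactSupport hsupp one_ne_zero
    exact measurable_homogeneousSingularIntegral volume (by rw [hd]; linarith)
      (by rw [hd]; linarith) hΩ hΩi' hΩ₀' hB hL
  · simpa only [lqNorm, hd, ← ofReal_norm, ← gradNorm_eq_norm_fderiv, Real.norm_eq_abs,
      ← roughOp_eq_homogeneousSingularIntegral] using strong_type f hf hsupp

end Euclidean

/-- Sobolev mapping properties of `T_{Ω,α}`, `0 < α < 1`,
`Ω ∈ L(log L)^{1/n'}(𝕊^{n-1})` of mean zero:
`T_{Ω,α} : Ẇ^{1,p} → L^q` for `n < p < n/α`, `1/q = 1/p - α/n`, and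
`T_{Ω,α} : Ẇ^{1,n} → L^{n/(1-α),∞}`. -/
theorem statement7 (n : ℕ) (hn : 2 ≤ n) (α : ℝ) (hα0 : 0 < α) (hα1 : α < 1)
    (Ω : Rn n → ℝ) (hΩmeas : Measurable Ω) (hΩorl : (orliczSet n Ω).Nonempty)
    (hΩint : Integrable Ω (sphereMeasure n))
    (hΩmean : ∫ y, Ω y ∂sphereMeasure n = 0) :
    (∀ p q : ℝ, (n : ℝ) < p → p < n / α → 1 / q = 1 / p - α / n →
      ∃ C > (0 : ℝ), ∀ f : Rn n → ℝ, IsCcSmooth f →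
        lqNorm n q (fun x => ENNReal.ofReal |roughOp n α Ω f x|) ≤
          ENNReal.ofReal C * lqNorm n p (fun x => ENNReal.ofReal (gradNorm f x))) ∧
    (∃ C > (0 : ℝ), ∀ f : Rn n → ℝ, IsCcSmooth f →
      weakNorm n ((n : ℝ) / (1 - α)) (fun x => ENNReal.ofReal |roughOp n α Ω f x|) ≤
        ENNReal.ofReal C * lqNorm n n (fun x => ENNReal.ofReal (gradNorm f x))) := by
  have hn' : (1 : ℝ) < n := by exact_mod_cast hn
  have contDiff_one {f : Rn n → ℝ} (hf : IsCcSmooth f) : ContDiff ℝ 1 f :=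
    hf.1.of_le (by exact_mod_cast le_top)
  refine ⟨fun p q hnp hpα hpq ↦ ?_, ?_⟩
  · obtain ⟨C, hC, strong_type⟩ := statement7_general hα0 hα1 hΩmeas hΩint hΩmean
      (hn'.trans hnp) (by linarith) hpα hpq
    exact ⟨C, hC, fun f hf ↦ (strong_type f (contDiff_one hf) hf.2).2⟩
  · obtain ⟨C, hC, strong_type⟩ := statement7_general (p := n) (q := n / (1 - α)) hα0 hα1 hΩmeas
      hΩint hΩmean hn' (by linarith) ((lt_div_iff₀ hα0).2 (by nlinarith))
      (by rw [one_div_div, sub_div])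
    refine ⟨C, hC, fun f hf ↦ ?_⟩
    obtain ⟨hT, hle⟩ := strong_type f (contDiff_one hf) hf.2
    exact (weakNorm_le_lqNorm (div_pos (by positivity) (sub_pos.2 hα1))
      (by fun_prop)).trans hle

end
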